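/- arXiv:2003.01830 — 7 statements merged into one kernel-verified Lean document; each statement's English description precedes it below -/
import Mathlib

section
/- Let f = Σ_{i=0}^d a_i x^i ∈ K[x] with a_d ≠ 0, and let i_0 < i_1 < … < i_s be the indices such that (i_0, v(a_{i_0})), …, (i_s, v(a_{i_s})) are the vertices of NP(f); for j = 1,…,s let ρ_j ∈ ℚ be the slope of the edge joining (i_{j−1}, v(a_{i_{j−1}})) and (i_j, v(a_{i_j})). Then f factors over K as f = c·x^{i_0}·g_1⋯g_s, where c ∈ K^×, each g_j ∈ K[x] is monic of degree i_j − i_{j−1}, and every root of g_j in K̄ has valuation −ρ_j. -/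
open Polynomial
open scoped Classical

namespace ClusterPicture

variable {K Kbar : Type*} [Field K] [Field Kbar] [Algebra K Kbar]

lemma zero_lt_top' : (0 : WithTop ℚ) < ⊤ := by
  simp

lemma withTop_add_pos {a b : WithTop ℚ} (ha : 0 ≤ a) (hb : 0 < b) : 0 < a + b := by
  rcases eq_or_ne a ⊤ with h | h
  · subst h; rw [top_add]; exact zero_lt_top'
  · lift a to ℚ using h
    rcases eq_or_ne b ⊤ with h' | h'
    · subst h'; rw [add_top]; exact zero_lt_top'
    · lift b to ℚ using h'
      have ha' : (0 : ℚ) ≤ a := by exact_mod_cast ha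
      have hb' : (0 : ℚ) < b := by exact_mod_cast hb
      exact_mod_cast add_pos_of_nonneg_of_pos ha' hb'

/-- The setting of the paper: `K` is a complete discretely valued field, with valuation `v`
normalised so that `v(K^×) = ℤ`, `Kbar` is an algebraic closure of `K`, and `v` is (the unique)
extension of the valuation to a `ℚ ∪ {∞}`-valued valuation on `Kbar`. -/
structure Setup (K Kbar : Type*) [Field K] [Field Kbar] [Algebra K Kbar] : Type _ where
  /-- the valuation on the algebraic closure -/
  v : Kbar → WithTop ℚ
  v_top_iff : ∀ x : Kbar, v x = ⊤ ↔ x = 0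
  v_one : v 1 = 0
  v_neg : ∀ x : Kbar, v (-x) = v x
  v_mul : ∀ x y : Kbar, v (x * y) = v x + v y
  v_add : ∀ x y : Kbar, min (v x) (v y) ≤ v (x + y)
  /-- the valuation is normalised: nonzero elements of `K` have integer valuation -/
  v_base_int : ∀ x : K, x ≠ 0 → ∃ n : ℤ, v (algebraMap K Kbar x) = ((n : ℚ) : WithTop ℚ)
  /-- the valuation is surjective onto `ℤ` on `K^×`: there is a uniformiser -/
  exists_uniformiser : ∃ π : K, v (algebraMap K Kbar π) = ((1 : ℚ) : WithTop ℚ)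
  /-- `Kbar` is an algebraic closure of `K` -/
  algClosed : IsAlgClosed Kbar
  algebraic : Algebra.IsAlgebraic K Kbar
  /-- `K` is complete with respect to the valuation -/
  complete : ∀ a : ℕ → K,
    (∀ q : ℚ, ∃ N : ℕ, ∀ m, N ≤ m → ∀ n, N ≤ n →
      ((q : ℚ) : WithTop ℚ) ≤ v (algebraMap K Kbar (a m - a n))) →
    ∃ b : K, ∀ q : ℚ, ∃ N : ℕ, ∀ n, N ≤ n →
      ((q : ℚ) : WithTop ℚ) ≤ v (algebraMap K Kbar (a n - b))

/-- Valuation of an element of the base field `K`. -/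
def Setup.vK (S : Setup K Kbar) (x : K) : WithTop ℚ := S.v (algebraMap K Kbar x)

/-- The finite set of roots of `f` in the algebraic closure `Kbar`. -/
noncomputable def rootFinset (f : K[X]) : Finset Kbar :=
  (f.map (algebraMap K Kbar)).roots.toFinset

/-- A cluster for `f`: a nonempty subset of the set of roots of `f` cut out by a `v`-adic disc. -/
def IsCluster (S : Setup K Kbar) (f : K[X]) (s : Finset Kbar) : Prop :=
  s.Nonempty ∧ ∃ (z : Kbar) (δ : ℚ),
    s = (rootFinset f).filter fun r => ((δ : ℚ) : WithTop ℚ) ≤ S.v (r - z)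

/-- The depth `d_s = min_{r,r' ∈ s} v (r - r')` of a cluster. -/
noncomputable def depth (S : Setup K Kbar) (s : Finset Kbar) : WithTop ℚ :=
  s.inf fun r => s.inf fun r' => S.v (r - r')

/-- `min_{r ∈ s} v (r - z)`, for `z ∈ Kbar`. -/
noncomputable def dmin (S : Setup K Kbar) (s : Finset Kbar) (z : Kbar) : WithTop ℚ :=
  s.inf fun r => S.v (r - z)

/-- `min_{r ∈ s} v (r - w)`, for `w ∈ K`. -/
noncomputable def dminK (S : Setup K Kbar) (s : Finset Kbar) (w : K) : WithTop ℚ :=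
  dmin S s (algebraMap K Kbar w)

/-- `w ∈ K` is a rational centre of `s` if it maximises `min_{r ∈ s} v (r - w)`.
For a proper cluster `s` with rational centre `w`, the radius `ρ_s` is `dminK S s w`. -/
def IsRationalCentre (S : Setup K Kbar) (s : Finset Kbar) (w : K) : Prop :=
  ∀ w' : K, dminK S s w' ≤ dminK S s w

/-- A rational cluster: a cluster cut out by a disc with centre in `K`. -/
def IsRationalCluster (S : Setup K Kbar) (f : K[X]) (s : Finset Kbar) : Prop :=
  s.Nonempty ∧ ∃ (w : K) (δ : ℚ),
    s = (rootFinset f).filter fun r => ((δ : ℚ) : WithTop ℚ) ≤ S.v (r - algebraMap K Kbar w)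

/-- A cluster centred at `w ∈ K`. -/
def IsClusterCentredAt (S : Setup K Kbar) (f : K[X]) (w : K) (s : Finset Kbar) : Prop :=
  s.Nonempty ∧ ∃ δ : ℚ,
    s = (rootFinset f).filter fun r => ((δ : ℚ) : WithTop ℚ) ≤ S.v (r - algebraMap K Kbar w)

/-- The cluster picture of `f` is almost rational: every proper cluster `s` with
`|s| > |ρ_s|_p` satisfies `d_s = ρ_s`. -/
def AlmostRational (S : Setup K Kbar) (f : K[X]) (p : ℕ) : Prop :=
  ∀ s : Finset Kbar, IsCluster S f s → 1 < s.card →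
    ∀ (w : K) (ρ : ℚ), IsRationalCentre S s w → dminK S s w = ((ρ : ℚ) : WithTop ℚ) →
      padicNorm p ρ < (s.card : ℚ) → depth S s = ((ρ : ℚ) : WithTop ℚ)

/-- The slope of the `j`-th edge of the polygon with vertices `(i_j, c_j)`. -/
def NPslope {s : ℕ} (i : Fin (s + 1) → ℕ) (c : Fin (s + 1) → ℚ) (j : Fin s) : ℚ :=
  (c j.succ - c j.castSucc) / ((i j.succ : ℚ) - (i j.castSucc : ℚ))

/-- `(i_0, c_0), …, (i_s, c_s)` are the vertices of the Newton polygon of `f`: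
the points `(i_j, c_j)` are among the points `(m, v(a_m))`, the first and last vertices lie
above the trailing and leading coefficients, the slopes of consecutive edges strictly
increase, and every point `(m, v(a_m))` lies on or above (the line spanned by) every edge. -/
structure IsNPVertices (S : Setup K Kbar) (f : K[X]) (s : ℕ)
    (i : Fin (s + 1) → ℕ) (c : Fin (s + 1) → ℚ) : Prop where
  mono : StrictMono i
  first : i 0 = f.natTrailingDegree
  last : i (Fin.last s) = f.natDegree
  vert : ∀ j, S.vK (f.coeff (i j)) = ((c j : ℚ) : WithTop ℚ)
  slope_mono : StrictMono (NPslope i c)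
  support : ∀ (j : Fin s) (m : ℕ) (q : ℚ), S.vK (f.coeff m) = ((q : ℚ) : WithTop ℚ) →
    (c j.succ - c j.castSucc) * ((m : ℚ) - (i j.castSucc : ℚ)) ≤
      (q - c j.castSucc) * ((i j.succ : ℚ) - (i j.castSucc : ℚ))

/-- The valuation ring of `Kbar`. -/
def intRing (S : Setup K Kbar) : Subring Kbar where
  carrier := {x : Kbar | (0 : WithTop ℚ) ≤ S.v x}
  zero_mem' := by
    simp only [Set.mem_setOf_eq, (S.v_top_iff 0).mpr rfl]
    exact le_top
  one_mem' := by
    simp only [Set.mem_setOf_eq, S.v_one]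
    exact le_refl _
  add_mem' := by
    intro a b ha hb
    exact le_trans (le_min ha hb) (S.v_add a b)
  mul_mem' := by
    intro a b ha hb
    simp only [Set.mem_setOf_eq, S.v_mul a b]
    exact add_nonneg ha hb
  neg_mem' := by
    intro a ha
    simpa only [Set.mem_setOf_eq, S.v_neg] using ha

lemma mem_intRing {S : Setup K Kbar} {x : Kbar} :
    x ∈ intRing S ↔ (0 : WithTop ℚ) ≤ S.v x := Iff.rfl

/-- The maximal ideal of the valuation ring of `Kbar`. -/
def maxIdeal (S : Setup K Kbar) : Ideal (intRing S) where
  carrier := {x : intRing S | (0 : WithTop ℚ) < S.v (x : Kbar)}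
  zero_mem' := by
    show (0 : WithTop ℚ) < S.v ((0 : intRing S) : Kbar)
    rw [show ((0 : intRing S) : Kbar) = 0 from rfl, (S.v_top_iff 0).mpr rfl]
    exact zero_lt_top'
  add_mem' := by
    intro a b ha hb
    show (0 : WithTop ℚ) < S.v ((a : Kbar) + (b : Kbar))
    exact lt_of_lt_of_le (lt_min ha hb) (S.v_add _ _)
  smul_mem' := by
    intro c x hx
    show (0 : WithTop ℚ) < S.v ((c : Kbar) * (x : Kbar))
    rw [S.v_mul]
    exact withTop_add_pos c.2 hx

/-- The residue field of `Kbar`; it is an algebraic closure of the residue field `k` of `K`. -/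
abbrev Residue (S : Setup K Kbar) : Type _ := intRing S ⧸ maxIdeal S

/-- Reduction to the residue field (with junk value `0` on non-integral elements). -/
noncomputable def red (S : Setup K Kbar) (x : Kbar) : Residue S :=
  if h : (0 : WithTop ℚ) ≤ S.v x then Ideal.Quotient.mk (maxIdeal S) ⟨x, mem_intRing.mpr h⟩
  else 0

/-- The reduction `f̄|_L` of `f` along the edge `L` of its Newton polygon with endpoints
`(i₁, q₁)` and `(i₂, q₂)`, of slope `ρ = nρ / n` where `n` is the denominator of `ρ`;
`π` is a uniformiser of `K`.  This is the reduction of `π^{-q₁}·(f|_L)(π^{-nρ}·x)`, where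
`f|_L (x) = ∑_j a_{n j + i₁} x^j`. -/
noncomputable def redEdge (S : Setup K Kbar) (π : K) (f : K[X])
    (i₁ i₂ : ℕ) (q₁ nρ : ℤ) (n : ℕ) : Polynomial (Residue S) :=
  ∑ j ∈ Finset.range ((i₂ - i₁) / n + 1),
    Polynomial.C (red S (algebraMap K Kbar (f.coeff (n * j + i₁)) *
      (algebraMap K Kbar π) ^ (-(q₁ + (j : ℤ) * nρ)))) * Polynomial.X ^ j

/-- `f` is NP-regular (`Δ_v`-regular in dimension 1): for every edge `L` of its Newton
polygon, the reduction `f̄|_L` has no multiple roots in the algebraic closure of the residue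
field, i.e. is separable. -/
def NPRegular (S : Setup K Kbar) (π : K) (f : K[X]) : Prop :=
  ∀ (s : ℕ) (i : Fin (s + 1) → ℕ) (c : Fin (s + 1) → ℚ),
    IsNPVertices S f s i c →
    ∀ (j : Fin s) (q₁ nρ : ℤ) (n : ℕ),
      (q₁ : ℚ) = c j.castSucc →
      n = (NPslope i c j).den →
      (nρ : ℚ) = (n : ℚ) * NPslope i c j →
      (redEdge S π f (i j.castSucc) (i j.succ) q₁ nρ n).Separable

/-- The vertex-index function of the Newton polygon of `f(x+w)`, in terms of the sizes of
the clusters `s_1 ⊂ … ⊂ s_{n+1}` centred at `w`; here `t` is the prescribed first index. -/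
def vertIdx {n : ℕ} (t : ℕ) (s : Fin (n + 1) → Finset Kbar) : Fin (n + 2) → ℕ :=
  fun j => Fin.cases (motive := fun _ => ℕ) t (fun j' => (s j').card) j

/-- The vertex-value function of the Newton polygon of `f(x+w)`: the vertex over `|s_j|` has
second coordinate `ε_{s_j} - |s_j|·ρ_{s_j}`; `c0` is the prescribed value at the first vertex. -/
def vertVal {n : ℕ} (c0 : ℚ) (s : Fin (n + 1) → Finset Kbar) (ρ ε : Fin (n + 1) → ℚ) :
    Fin (n + 2) → ℚ :=
  fun j => Fin.cases (motive := fun _ => ℚ) c0 (fun j' => ε j' - ((s j').card : ℚ) * ρ j') j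


section Span

variable {L : Type*} [Field L]

/-- `a` and `b` are the first and last index at which `N (p_m) * t ^ m` attains its maximum. -/
structure Span (N : AbsoluteValue L ℝ) (t : ℝ) (P : L[X]) (a b : ℕ) (w : ℝ) : Prop where
  pos : 0 < w
  le : ∀ m, N (P.coeff m) * t ^ m ≤ w
  eqa : N (P.coeff a) * t ^ a = w
  eqb : N (P.coeff b) * t ^ b = w
  lta : ∀ m, m < a → N (P.coeff m) * t ^ m < w
  ltb : ∀ m, b < m → N (P.coeff m) * t ^ m < w

lemma Span.unique {N : AbsoluteValue L ℝ} {t : ℝ} {P : L[X]} {a b a' b' : ℕ} {w w' : ℝ}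
    (h : Span N t P a b w) (h' : Span N t P a' b' w') : a = a' ∧ b = b' := by
  have hw : w = w' := le_antisymm (by rw [← h.eqa]; exact h'.le a) (by rw [← h'.eqa]; exact h.le a')
  subst hw
  constructor
  · rcases lt_trichotomy a a' with h1 | h1 | h1
    · exact absurd h.eqa (h'.lta _ h1).ne
    · exact h1
    · exact absurd h'.eqa (h.lta _ h1).ne
  · rcases lt_trichotomy b b' with h1 | h1 | h1
    · exact absurd h'.eqb (h.ltb _ h1).ne
    · exact h1
    · exact absurd h.eqb (h'.ltb _ h1).ne

lemma na_eq {N : AbsoluteValue L ℝ} (hN : ∀ x y, N (x + y) ≤ max (N x) (N y)) {x y : L}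
    (h : N x < N y) : N (x + y) = N y := by
  apply le_antisymm
  · exact (hN x y).trans (max_le h.le le_rfl)
  · have := hN (x + y) (-x)
    rw [show x + y + -x = y by ring, N.map_neg] at this
    rcases le_max_iff.1 this with h1 | h1
    · exact h1
    · exact absurd h1 (not_le.2 h)

/-- Real-sequence facts on multiplying by `X - C r`. -/
lemma step_facts {N : AbsoluteValue L ℝ} (hN : ∀ x y, N (x + y) ≤ max (N x) (N y)) {t : ℝ}
    (ht : 0 < t) (P : L[X]) (r : L) (m : ℕ) :
    N ((P * (X - C r)).coeff (m + 1)) * t ^ (m + 1) ≤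
        max (t * (N (P.coeff m) * t ^ m)) (N r * (N (P.coeff (m + 1)) * t ^ (m + 1))) ∧
    (t * (N (P.coeff m) * t ^ m) < N r * (N (P.coeff (m + 1)) * t ^ (m + 1)) →
      N ((P * (X - C r)).coeff (m + 1)) * t ^ (m + 1) =
        N r * (N (P.coeff (m + 1)) * t ^ (m + 1))) ∧
    (N r * (N (P.coeff (m + 1)) * t ^ (m + 1)) < t * (N (P.coeff m) * t ^ m) →
      N ((P * (X - C r)).coeff (m + 1)) * t ^ (m + 1) = t * (N (P.coeff m) * t ^ m)) := by
  have e : (P * (X - C r)).coeff (m + 1) = P.coeff m + (-(P.coeff (m + 1) * r)) := by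
    rw [mul_sub, coeff_sub, coeff_mul_X, coeff_mul_C]; ring
  have e1 : t * (N (P.coeff m) * t ^ m) = N (P.coeff m) * t ^ (m + 1) := by ring
  have e2 : N r * (N (P.coeff (m + 1)) * t ^ (m + 1)) =
      N (-(P.coeff (m + 1) * r)) * t ^ (m + 1) := by
    rw [N.map_neg, N.map_mul]; ring
  have hp : 0 < t ^ (m + 1) := pow_pos ht _
  rw [e, e1, e2]
  refine ⟨?_, ?_, ?_⟩
  · rw [← max_mul_of_nonneg _ _ hp.le]
    exact mul_le_mul_of_nonneg_right (hN _ _) hp.le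
  · intro h
    rw [na_eq hN (lt_of_mul_lt_mul_right h hp.le)]
  · intro h
    rw [add_comm, na_eq hN (lt_of_mul_lt_mul_right h hp.le)]

lemma step_zero {N : AbsoluteValue L ℝ} {t : ℝ} (P : L[X]) (r : L) :
    N ((P * (X - C r)).coeff 0) * t ^ 0 = N r * (N (P.coeff 0) * t ^ 0) := by
  simp [mul_coeff_zero, mul_comm]

lemma Span.step {N : AbsoluteValue L ℝ} (hN : ∀ x y, N (x + y) ≤ max (N x) (N y)) {t : ℝ}
    (ht : 0 < t) {P : L[X]} {a b : ℕ} {w : ℝ} (h : Span N t P a b w) (r : L) :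
    ∃ w', Span N t (P * (X - C r)) (a + if N r < t then 1 else 0)
      (b + if N r ≤ t then 1 else 0) w' := by
  have F := step_facts hN ht P r
  have Z := step_zero (N := N) (t := t) P r
  obtain ⟨hw, hle, ha, hb, hlta, hltb⟩ := h
  have hA : ∀ m, 0 ≤ N (P.coeff m) * t ^ m := fun m => mul_nonneg (N.nonneg _) (pow_pos ht _).le
  have hR : 0 ≤ N r := N.nonneg r
  generalize hB : (fun m => N ((P * (X - C r)).coeff m) * t ^ m) = B
  have hB' : ∀ m, N ((P * (X - C r)).coeff m) * t ^ m = B m := fun m => congrFun hB m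
  generalize hA2 : (fun m => N (P.coeff m) * t ^ m) = A
  have hA' : ∀ m, N (P.coeff m) * t ^ m = A m := fun m => congrFun hA2 m
  suffices hs : ∃ w', 0 < w' ∧ (∀ m, B m ≤ w') ∧ B (a + if N r < t then 1 else 0) = w' ∧
      B (b + if N r ≤ t then 1 else 0) = w' ∧ (∀ m, m < (a + if N r < t then 1 else 0) → B m < w') ∧
      (∀ m, (b + if N r ≤ t then 1 else 0) < m → B m < w') by
    obtain ⟨w', h1, h2, h3, h4, h5, h6⟩ := hs
    refine ⟨w', h1, ?_, ?_, ?_, ?_, ?_⟩ <;> simpa only [hB']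
  simp only [hB', hA'] at F Z hle ha hb hlta hltb hA
  generalize N r = R at *
  clear hB hB' hA2 hA'
  have hmax : ∀ m W, t * A m < W → R * A (m + 1) < W → B (m + 1) < W := fun m W h1 h2 =>
    (F m).1.trans_lt (max_lt h1 h2)
  have hmax' : ∀ m W, t * A m ≤ W → R * A (m + 1) ≤ W → B (m + 1) ≤ W := fun m W h1 h2 =>
    (F m).1.trans (max_le h1 h2)
  have ht1 : ∀ m, t * A m ≤ t * w := fun m => mul_le_mul_of_nonneg_left (hle m) ht.le
  have hR1 : ∀ m, R * A m ≤ R * w := fun m => mul_le_mul_of_nonneg_left (hle m) hR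
  rcases lt_trichotomy R t with hRt | hRt | hRt
  · have hs : R * w < t * w := mul_lt_mul_of_pos_right hRt hw
    have hR2 : ∀ m, R * A m < t * w := fun m => (hR1 m).trans_lt hs
    simp only [hRt, hRt.le, if_true]
    refine ⟨t * w, by positivity, ?_, ?_, ?_, ?_, ?_⟩
    · rintro (_ | m)
      · rw [Z]; exact (hR2 0).le
      · exact hmax' m _ (ht1 m) (hR2 _).le
    · rw [(F a).2.2 (by rw [ha]; exact hR2 _), ha]
    · rw [(F b).2.2 (by rw [hb]; exact hR2 _), hb]
    · rintro (_ | m) hm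
      · rw [Z]; exact hR2 0
      · exact hmax m _ (mul_lt_mul_of_pos_left (hlta m (by omega)) ht) (hR2 _)
    · rintro (_ | m) hm
      · omega
      · exact hmax m _ (mul_lt_mul_of_pos_left (hltb m (by omega)) ht) (hR2 _)
  · subst hRt
    simp only [lt_irrefl, le_refl, if_true, if_false, add_zero]
    refine ⟨R * w, by positivity, ?_, ?_, ?_, ?_, ?_⟩
    · rintro (_ | m)
      · rw [Z]; exact hR1 0
      · exact hmax' m _ (ht1 m) (hR1 _)
    · rcases a with _ | a
      · rw [Z, ha]
      · rw [(F a).2.1 (by rw [ha]; exact mul_lt_mul_of_pos_left (hlta a (by omega)) ht), ha]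
    · rw [(F b).2.2 (by rw [hb]; exact mul_lt_mul_of_pos_left (hltb _ (by omega)) ht), hb]
    · rintro (_ | m) hm
      · rw [Z]; exact mul_lt_mul_of_pos_left (hlta _ (by omega)) ht
      · exact hmax m _ (mul_lt_mul_of_pos_left (hlta m (by omega)) ht)
          (mul_lt_mul_of_pos_left (hlta _ (by omega)) ht)
    · rintro (_ | m) hm
      · omega
      · exact hmax m _ (mul_lt_mul_of_pos_left (hltb m (by omega)) ht)
          (mul_lt_mul_of_pos_left (hltb _ (by omega)) ht)
  · have hs : t * w < R * w := mul_lt_mul_of_pos_right hRt hw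
    have hRp : 0 < R := ht.trans hRt
    have hR2 : ∀ m, t * A m < R * w := fun m => (ht1 m).trans_lt hs
    simp only [not_lt.2 hRt.le, not_le.2 hRt, if_false, add_zero]
    refine ⟨R * w, by positivity, ?_, ?_, ?_, ?_, ?_⟩
    · rintro (_ | m)
      · rw [Z]; exact hR1 0
      · exact hmax' m _ (hR2 m).le (hR1 _)
    · rcases a with _ | a
      · rw [Z, ha]
      · rw [(F a).2.1 (by rw [ha]; exact hR2 _), ha]
    · rcases b with _ | b
      · rw [Z, hb]
      · rw [(F b).2.1 (by rw [hb]; exact hR2 _), hb]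
    · rintro (_ | m) hm
      · rw [Z]; exact mul_lt_mul_of_pos_left (hlta _ (by omega)) hRp
      · exact hmax m _ (hR2 m) (mul_lt_mul_of_pos_left (hlta _ (by omega)) hRp)
    · rintro (_ | m) hm
      · omega
      · exact hmax m _ (hR2 m) (mul_lt_mul_of_pos_left (hltb _ (by omega)) hRp)

lemma span_prod {N : AbsoluteValue L ℝ} (hN : ∀ x y, N (x + y) ≤ max (N x) (N y)) {t : ℝ}
    (ht : 0 < t) (u : L) (hu : u ≠ 0) (M : Multiset L) :
    ∃ w, Span N t (C u * (M.map fun r => X - C r).prod)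
      (M.countP fun r => N r < t) (M.countP fun r => N r ≤ t) w := by
  induction M using Multiset.induction_on with
  | empty =>
    refine ⟨N u, N.pos hu, ?_, ?_, ?_, ?_, ?_⟩
    · rintro (_ | m) <;> simp [coeff_C]
    · simp
    · simp
    · simp
    · rintro (_ | m) <;> simp [coeff_C, hu]
  | cons r M ih =>
    obtain ⟨w, hw⟩ := ih
    obtain ⟨w', hw'⟩ := hw.step hN ht r
    refine ⟨w', ?_⟩
    rw [Multiset.map_cons, Multiset.prod_cons, Multiset.countP_cons, Multiset.countP_cons]
    convert hw' using 1
    ring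

lemma countP_split (N : AbsoluteValue L ℝ) (t : ℝ) (M : Multiset L) :
    (M.countP fun r => N r ≤ t) = (M.countP fun r => N r < t) + M.countP fun r => N r = t := by
  induction M using Multiset.induction_on with
  | empty => simp
  | cons r M ih =>
    rw [Multiset.countP_cons, Multiset.countP_cons, Multiset.countP_cons, ih]
    rcases lt_trichotomy (N r) t with h | h | h
    · simp [h, h.le, h.ne]; omega
    · simp [h]; omega
    · simp [h.ne', not_le.2 h, not_lt.2 h.le]

/-- The number of roots of absolute value `t`, read off from a `Span`. -/
lemma count_roots [IsAlgClosed L] {N : AbsoluteValue L ℝ}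
    (hN : ∀ x y, N (x + y) ≤ max (N x) (N y)) {t : ℝ}
    (ht : 0 < t) {P : L[X]} (hP : P ≠ 0) {a b : ℕ} {w : ℝ} (h : Span N t P a b w) :
    (P.roots.countP fun r => N r = t) = b - a := by
  obtain ⟨w', h'⟩ := span_prod hN ht P.leadingCoeff (leadingCoeff_ne_zero.2 hP) P.roots
  rw [← (IsAlgClosed.splits P).eq_prod_roots] at h'
  obtain ⟨h1, h2⟩ := h.unique h'
  rw [h1, h2, countP_split]; omega

end Span


/-- The absolute value scale `q ↦ 2 ^ (-q)`. -/
noncomputable def expo (a : WithTop ℚ) : ℝ :=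
  WithTop.recTopCoe (C := fun _ => ℝ) 0 (fun q : ℚ => (2 : ℝ) ^ (-(q : ℝ))) a

lemma expo_top : expo ⊤ = 0 := rfl

lemma expo_coe (q : ℚ) : expo (q : WithTop ℚ) = (2 : ℝ) ^ (-(q : ℝ)) := rfl

lemma expo_coe_pos (q : ℚ) : 0 < expo (q : WithTop ℚ) := by
  rw [expo_coe]; positivity

lemma expo_nonneg (a : WithTop ℚ) : 0 ≤ expo a := by
  induction a using WithTop.recTopCoe with
  | top => exact le_of_eq expo_top.symm
  | coe q => exact (expo_coe_pos q).le

lemma expo_lt_iff {a b : WithTop ℚ} : expo a < expo b ↔ b < a := by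
  induction a using WithTop.recTopCoe with
  | top =>
    induction b using WithTop.recTopCoe with
    | top => simp
    | coe q => simp only [expo_top, expo_coe_pos, WithTop.coe_lt_top]
  | coe p =>
    induction b using WithTop.recTopCoe with
    | top => simp only [expo_top, not_lt.2 (expo_nonneg _), not_top_lt]
    | coe q =>
      rw [expo_coe, expo_coe, Real.rpow_lt_rpow_left_iff (by norm_num), WithTop.coe_lt_coe]
      simp

lemma expo_le_iff {a b : WithTop ℚ} : expo a ≤ expo b ↔ b ≤ a := by
  rw [← not_lt, ← not_lt, expo_lt_iff]

lemma expo_inj {a b : WithTop ℚ} : expo a = expo b ↔ a = b := by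
  rw [le_antisymm_iff, le_antisymm_iff, expo_le_iff, expo_le_iff, and_comm]

lemma expo_add (a b : WithTop ℚ) : expo (a + b) = expo a * expo b := by
  induction a using WithTop.recTopCoe with
  | top => simp [expo_top]
  | coe p =>
    induction b using WithTop.recTopCoe with
    | top => simp [expo_top]
    | coe q =>
      rw [← WithTop.coe_add, expo_coe, expo_coe, expo_coe, ← Real.rpow_add (by norm_num)]
      congr 1; push_cast; ring

lemma expo_min (a b : WithTop ℚ) : expo (min a b) = max (expo a) (expo b) := by
  rcases le_total a b with h | h
  · rw [min_eq_left h, max_eq_left (expo_le_iff.2 h)]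
  · rw [min_eq_right h, max_eq_right (expo_le_iff.2 h)]

lemma Setup.na (S : Setup K Kbar) (x y : Kbar) :
    expo (S.v (x + y)) ≤ max (expo (S.v x)) (expo (S.v y)) := by
  rw [← expo_min, expo_le_iff]; exact S.v_add x y

/-- The absolute value on `Kbar`. -/
noncomputable def Setup.absv (S : Setup K Kbar) : AbsoluteValue Kbar ℝ where
  toFun x := expo (S.v x)
  map_mul' x y := by rw [S.v_mul, expo_add]
  nonneg' x := expo_nonneg _
  eq_zero' x := by rw [← expo_top, expo_inj, S.v_top_iff]
  add_le' x y := (S.na x y).trans (max_le_add_of_nonneg (expo_nonneg _) (expo_nonneg _))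

lemma Setup.absv_apply (S : Setup K Kbar) (x : Kbar) : S.absv x = expo (S.v x) := rfl

/-- Conjugate elements have the same valuation. -/
lemma Setup.v_eq_of_minpoly_eq (S : Setup K Kbar) {x y : Kbar} (h : minpoly K x = minpoly K y) :
    S.v x = S.v y := by
  let N : AbsoluteValue K ℝ := S.absv.comp (algebraMap K Kbar).injective
  let nf : NormedField K := N.toNormedField
  have hnorm : ∀ x : K, ‖x‖ = expo (S.v (algebraMap K Kbar x)) := fun x => rfl
  obtain ⟨π, hπ⟩ := S.exists_uniformiser
  let nn : NontriviallyNormedField K := NontriviallyNormedField.ofNormNeOne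
    ⟨π, by
      rintro rfl
      rw [map_zero, (S.v_top_iff 0).2 rfl] at hπ
      exact WithTop.top_ne_coe hπ, by
      rw [hnorm, hπ, expo_coe]
      norm_num⟩
  have hu : IsUltrametricDist K := IsUltrametricDist.isUltrametricDist_of_isNonarchimedean_norm
    (fun x y => by
      rw [hnorm, hnorm, hnorm, map_add]
      exact S.na _ _)
  have key : ∀ (q : ℚ) (x : K), ‖x‖ ≤ expo (q : WithTop ℚ) ↔
      (q : WithTop ℚ) ≤ S.v (algebraMap K Kbar x) := by
    intro q x; rw [hnorm, expo_le_iff]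
  have small : ∀ ε : ℝ, 0 < ε → ∃ q : ℚ, expo (q : WithTop ℚ) < ε := by
    intro ε hε
    obtain ⟨n, hn⟩ := exists_pow_lt_of_lt_one hε (show (1 / 2 : ℝ) < 1 by norm_num)
    refine ⟨n, lt_of_eq_of_lt ?_ hn⟩
    rw [expo_coe, Rat.cast_natCast, Real.rpow_neg (by norm_num), Real.rpow_natCast]
    simp
  have hc : CompleteSpace K := by
    apply Metric.complete_of_cauchySeq_tendsto
    intro a ha
    rw [Metric.cauchySeq_iff] at ha
    obtain ⟨b, hb⟩ := S.complete a (by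
      intro q
      obtain ⟨M, hM⟩ := ha _ (expo_coe_pos q)
      refine ⟨M, fun m hm n hn => ?_⟩
      rw [← key, ← dist_eq_norm]
      exact (hM m hm n hn).le)
    refine ⟨b, ?_⟩
    rw [Metric.tendsto_atTop]
    intro ε hε
    obtain ⟨q, hq⟩ := small ε hε
    obtain ⟨M, hM⟩ := hb q
    refine ⟨M, fun n hn => ?_⟩
    rw [dist_eq_norm]
    exact ((key q _).2 (hM n hn)).trans_lt hq
  have := S.algebraic
  have hx := spectralNorm_unique_field_norm_ext (K := K) (L := Kbar) (f := S.absv)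
    (fun x => rfl)
  have h1 : S.absv x = S.absv y := by
    rw [hx x, hx y, spectralNorm, spectralNorm, h]
  exact expo_inj.1 h1

/-- The factor of `f` collecting all roots of valuation `l`. -/
lemma exists_factor (S : Setup K Kbar) (f : K[X]) (hf : f ≠ 0) (l : WithTop ℚ) :
    ∃ g : K[X], g.Monic ∧ g ∣ f ∧
      g.natDegree = ((f.map (algebraMap K Kbar)).roots.countP fun r => S.v r = l) ∧
      ∀ r : Kbar, (g.map (algebraMap K Kbar)).IsRoot r → S.v r = l := by
  have := S.algClosed
  have := S.algebraic
  set M := UniqueFactorizationMonoid.normalizedFactors f with hM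
  have hirr : ∀ p ∈ M, Irreducible p := fun p hp =>
    UniqueFactorizationMonoid.irreducible_of_normalized_factor p hp
  have hmon : ∀ p ∈ M, p.Monic := fun p hp => by
    rw [← UniqueFactorizationMonoid.normalize_normalized_factor p hp]
    exact monic_normalize (hirr p hp).ne_zero
  let A : K[X] → Prop := fun p => ∀ r : Kbar, (p.map (algebraMap K Kbar)).IsRoot r → S.v r = l
  have hA : ∀ p ∈ M, ¬ A p → ∀ r : Kbar, (p.map (algebraMap K Kbar)).IsRoot r → S.v r ≠ l := by
    intro p hp hn r hr hrl
    apply hn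
    intro r' hr'
    rw [← hrl]
    apply S.v_eq_of_minpoly_eq
    have h1 : ∀ z : Kbar, (p.map (algebraMap K Kbar)).IsRoot z → p = minpoly K z := fun z hz =>
      minpoly.eq_of_irreducible_of_monic (hirr p hp)
        (by rwa [IsRoot.def, eval_map_algebraMap] at hz) (hmon p hp)
    rw [← h1 r hr, ← h1 r' hr']
  have hroot : ∀ (Q : Multiset K[X]) (r : Kbar), ((Q.prod).map (algebraMap K Kbar)).IsRoot r →
      ∃ p ∈ Q, (p.map (algebraMap K Kbar)).IsRoot r := by
    intro Q r hr
    induction Q using Multiset.induction_on with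
    | empty => simp at hr
    | cons p Q ih =>
      rw [Multiset.prod_cons, Polynomial.map_mul, root_mul] at hr
      rcases hr with hr | hr
      · exact ⟨p, Multiset.mem_cons_self _ _, hr⟩
      · obtain ⟨p', h1, h2⟩ := ih hr
        exact ⟨p', Multiset.mem_cons_of_mem h1, h2⟩
  set g := (M.filter A).prod with hg
  set h := (M.filter fun p => ¬ A p).prod with hh
  have hfac : f = C f.leadingCoeff * (g * h) := by
    rw [hg, hh, ← Multiset.prod_add, Multiset.filter_add_not, hM,
      leadingCoeff_mul_prod_normalizedFactors]
  have hgm : g.Monic := by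
    have := monic_multiset_prod_of_monic (M.filter A) id
      (fun p hp => hmon p (Multiset.mem_of_mem_filter hp))
    rwa [Multiset.map_id] at this
  have hgr : ∀ r : Kbar, (g.map (algebraMap K Kbar)).IsRoot r → S.v r = l := by
    intro r hr
    obtain ⟨p, hp, hpr⟩ := hroot _ r hr
    exact (Multiset.mem_filter.1 hp).2 r hpr
  have hhr : ∀ r : Kbar, (h.map (algebraMap K Kbar)).IsRoot r → S.v r ≠ l := by
    intro r hr
    obtain ⟨p, hp, hpr⟩ := hroot _ r hr
    exact hA p (Multiset.mem_filter.1 hp).1 (Multiset.mem_filter.1 hp).2 r hpr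
  refine ⟨g, hgm, ⟨C f.leadingCoeff * h, hfac.trans (by ring)⟩, ?_, hgr⟩
  have hlc : f.leadingCoeff ≠ 0 := leadingCoeff_ne_zero.2 hf
  have hgh : (g * h).map (algebraMap K Kbar) ≠ 0 := by
    rw [Polynomial.map_ne_zero_iff (algebraMap K Kbar).injective]
    intro h0
    rw [h0, mul_zero] at hfac
    exact hf hfac
  have hroots : (f.map (algebraMap K Kbar)).roots =
      (g.map (algebraMap K Kbar)).roots + (h.map (algebraMap K Kbar)).roots := by
    rw [hfac, Polynomial.map_mul, map_C, roots_C_mul _ (by simpa using hlc), Polynomial.map_mul,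
      roots_mul (by rwa [← Polynomial.map_mul])]
  rw [hroots, Multiset.countP_add, Multiset.countP_eq_card.2, Multiset.countP_eq_zero.2,
    IsAlgClosed.card_roots_eq_natDegree, natDegree_map, add_zero]
  · intro r hr
    exact hhr r (isRoot_of_mem_roots hr)
  · intro r hr
    exact hgr r (isRoot_of_mem_roots hr)

lemma expo_pow (q : ℚ) (m : ℕ) : expo (q : WithTop ℚ) ^ m = expo ((m * q : ℚ) : WithTop ℚ) := by
  rw [expo_coe, expo_coe, ← Real.rpow_natCast, ← Real.rpow_mul (by norm_num)]
  congr 1; push_cast; ring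

lemma sum_diff (s : ℕ) (i : Fin (s + 1) → ℕ) (hi : Monotone i) :
    (∑ j : Fin s, (i j.succ - i j.castSucc)) + i 0 = i (Fin.last s) := by
  induction s with
  | zero => simp
  | succ s ih =>
    have h := ih (fun j => i j.castSucc) (fun a b hab => hi (by simpa using hab))
    rw [Fin.sum_univ_castSucc]
    simp only [Fin.succ_castSucc, Fin.castSucc_zero, Fin.succ_last] at h ⊢
    have h2 : i (Fin.last s).castSucc ≤ i (Fin.last (s + 1)) := hi (Fin.le_last _)
    simp only [Nat.succ_eq_add_one] at *
    omega

lemma span_of_vertices (S : Setup K Kbar) (f : K[X])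
    (s : ℕ) (i : Fin (s + 1) → ℕ) (c : Fin (s + 1) → ℚ)
    (hNP : IsNPVertices S f s i c) (j : Fin s) :
    Span S.absv (expo ((-(NPslope i c j) : ℚ) : WithTop ℚ)) (f.map (algebraMap K Kbar))
      (i j.castSucc) (i j.succ)
      (expo ((c j.castSucc - i j.castSucc * NPslope i c j : ℚ) : WithTop ℚ)) := by
  have hlen : ∀ j : Fin s, (0 : ℚ) < (i j.succ : ℚ) - i j.castSucc := fun j => by
    have h : i j.castSucc < i j.succ := hNP.mono (Fin.castSucc_lt_succ)
    have : (i j.castSucc : ℚ) < i j.succ := by exact_mod_cast h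
    linarith
  have line : ∀ j : Fin s, c j.succ - c j.castSucc =
      NPslope i c j * ((i j.succ : ℚ) - i j.castSucc) := fun j => by
    rw [NPslope, div_mul_cancel₀ _ (hlen j).ne']
  have supp : ∀ (j : Fin s) (m : ℕ) (q : ℚ), S.vK (f.coeff m) = ((q : ℚ) : WithTop ℚ) →
      NPslope i c j * ((m : ℚ) - i j.castSucc) ≤ q - c j.castSucc := fun j m q h => by
    have h1 := hNP.support j m q h
    rw [line j] at h1
    refine le_of_mul_le_mul_right ?_ (hlen j)
    linarith
  have val : ∀ (m : ℕ) (q : ℚ), S.vK (f.coeff m) = ((q : ℚ) : WithTop ℚ) →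
      S.absv ((f.map (algebraMap K Kbar)).coeff m) *
        expo ((-(NPslope i c j) : ℚ) : WithTop ℚ) ^ m =
      expo ((q - m * NPslope i c j : ℚ) : WithTop ℚ) := fun m q h => by
    rw [expo_pow, coeff_map, S.absv_apply]
    rw [Setup.vK] at h
    rw [h, ← expo_add, ← WithTop.coe_add]
    congr 2; ring
  have zer : ∀ m : ℕ, f.coeff m = 0 → S.absv ((f.map (algebraMap K Kbar)).coeff m) *
        expo ((-(NPslope i c j) : ℚ) : WithTop ℚ) ^ m = 0 := fun m h => by
    rw [coeff_map, h, map_zero, map_zero, zero_mul]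
  have ex : ∀ m : ℕ, f.coeff m ≠ 0 → ∃ q : ℚ, S.vK (f.coeff m) = ((q : ℚ) : WithTop ℚ) :=
    fun m h => by
      obtain ⟨n, hn⟩ := S.v_base_int _ h
      exact ⟨n, hn⟩
  refine ⟨expo_coe_pos _, fun m => ?_, val _ _ (hNP.vert _), ?_, fun m hm => ?_, fun m hm => ?_⟩
  · by_cases h0 : f.coeff m = 0
    · rw [zer m h0]; exact expo_nonneg _
    · obtain ⟨q, hq⟩ := ex m h0
      rw [val m q hq, expo_le_iff, WithTop.coe_le_coe]
      have := supp j m q hq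
      linarith
  · rw [val _ _ (hNP.vert _)]
    congr 2
    have := line j
    linarith
  · by_cases h0 : f.coeff m = 0
    · rw [zer m h0]; exact expo_coe_pos _
    · obtain ⟨q, hq⟩ := ex m h0
      rw [val m q hq, expo_lt_iff, WithTop.coe_lt_coe]
      by_cases hj : j.val = 0
      · exfalso
        apply h0
        apply coeff_eq_zero_of_lt_natTrailingDegree
        rw [← hNP.first]
        convert hm using 2
        exact Fin.ext (by simp [hj])
      · obtain ⟨j', hj'⟩ : ∃ j' : Fin s, j'.val + 1 = j.val :=
          ⟨⟨j.val - 1, by omega⟩, by simp; omega⟩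
        have e : j'.succ = j.castSucc := Fin.ext (by simp [hj'])
        have h1 := supp j' m q hq
        have h2 := line j'
        have h3 : NPslope i c j' < NPslope i c j :=
          hNP.slope_mono (Fin.lt_def.2 (by omega))
        rw [e] at h2
        have h4 : (m : ℚ) < i j.castSucc := by exact_mod_cast hm
        nlinarith [mul_pos (sub_pos.2 h3) (sub_pos.2 h4)]
  · by_cases h0 : f.coeff m = 0
    · rw [zer m h0]; exact expo_coe_pos _
    · obtain ⟨q, hq⟩ := ex m h0
      rw [val m q hq, expo_lt_iff, WithTop.coe_lt_coe]
      by_cases hj : j.val + 1 = s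
      · exfalso
        apply h0
        apply coeff_eq_zero_of_natDegree_lt
        rw [← hNP.last]
        convert hm using 2
        exact Fin.ext (by simp [hj])
      · obtain ⟨j', hj'⟩ : ∃ j' : Fin s, j'.val = j.val + 1 :=
          ⟨⟨j.val + 1, by omega⟩, rfl⟩
        have e : j'.castSucc = j.succ := Fin.ext (by simp [hj'])
        have h1 := supp j' m q hq
        have h2 := line j
        have h3 : NPslope i c j < NPslope i c j' :=
          hNP.slope_mono (Fin.lt_def.2 (by omega))
        rw [e] at h1
        have h4 : (i j.succ : ℚ) < m := by exact_mod_cast hm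
        nlinarith [mul_pos (sub_pos.2 h3) (sub_pos.2 h4)]

/-- **Newton polygon factorisation.** Let `f = Σ a_i x^i ∈ K[x]` with `a_d ≠ 0`, and let
`i_0 < … < i_s` be the vertices of `NP(f)`, with `ρ_j` the slope of the `j`-th edge. Then
`f = c·x^{i_0}·g_1⋯g_s` over `K`, with `c ∈ K^×`, `g_j` monic of degree `i_j − i_{j−1}`,
all of whose roots in `K̄` have valuation `−ρ_j`. -/
theorem newton_polygon_factorisation
    (S : Setup K Kbar) (f : K[X]) (hf : f ≠ 0)
    (s : ℕ) (i : Fin (s + 1) → ℕ) (c : Fin (s + 1) → ℚ)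
    (hNP : IsNPVertices S f s i c) :
    ∃ (u : K) (g : Fin s → K[X]), u ≠ 0 ∧
      f = Polynomial.C u * Polynomial.X ^ (i 0) * ∏ j, g j ∧
      ∀ j : Fin s, (g j).Monic ∧
        (g j).natDegree = i j.succ - i j.castSucc ∧
        ∀ r : Kbar, ((g j).map (algebraMap K Kbar)).IsRoot r →
          S.v r = ((-(NPslope i c j) : ℚ) : WithTop ℚ) := by
  have hac := S.algClosed
  have hfm : f.map (algebraMap K Kbar) ≠ 0 :=
    (Polynomial.map_ne_zero_iff (algebraMap K Kbar).injective).2 hf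
  have H : ∀ j : Fin s, ∃ g : K[X], g.Monic ∧ g ∣ f ∧ g.natDegree = i j.succ - i j.castSucc ∧
      ∀ r : Kbar, (g.map (algebraMap K Kbar)).IsRoot r →
        S.v r = ((-(NPslope i c j) : ℚ) : WithTop ℚ) := by
    intro j
    obtain ⟨g, h1, h2, h3, h4⟩ := exists_factor S f hf ((-(NPslope i c j) : ℚ) : WithTop ℚ)
    refine ⟨g, h1, h2, ?_, h4⟩
    rw [h3, ← count_roots (N := S.absv) S.na (expo_coe_pos _) hfm (span_of_vertices S f s i c hNP j)]
    simp only [S.absv_apply, expo_inj]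
  choose g hmon hdvd hdeg hroot using H
  have hroot' : ∀ (j : Fin s) (r : Kbar), aeval r (g j) = 0 →
      S.v r = ((-(NPslope i c j) : ℚ) : WithTop ℚ) := fun j r hr =>
    hroot j r (by rw [IsRoot.def, eval_map_algebraMap, hr])
  have hcop : Pairwise fun j k => IsCoprime (g j) (g k) := by
    intro j k hjk
    rw [isCoprime_iff_aeval_ne_zero_of_isAlgClosed (k := K) (K := Kbar)]
    intro r
    by_contra! hr
    have h1 := hroot' j r hr.1
    rw [hroot' k r hr.2, WithTop.coe_inj, neg_inj] at h1
    exact hjk (hNP.slope_mono.injective h1.symm)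
  have hcopX : IsCoprime (X ^ (i 0) : K[X]) (∏ j, g j) := by
    apply IsCoprime.prod_right
    intro j _
    apply IsCoprime.pow_left
    rw [isCoprime_iff_aeval_ne_zero_of_isAlgClosed (k := K) (K := Kbar)]
    intro r
    by_contra! hr
    have h1 := hroot' j r hr.2
    rw [(S.v_top_iff r).2 (by simpa using hr.1)] at h1
    exact WithTop.top_ne_coe h1
  have hXd : (X ^ (i 0) : K[X]) ∣ f := by
    rw [X_pow_dvd_iff]
    intro d hd
    apply coeff_eq_zero_of_lt_natTrailingDegree
    rwa [← hNP.first]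
  have hd : X ^ (i 0) * ∏ j, g j ∣ f := hcopX.mul_dvd hXd
    (Finset.prod_dvd_of_coprime (fun j _ k _ hjk => hcop hjk) (fun j _ => hdvd j))
  have hPm : (∏ j, g j).Monic := monic_prod_of_monic _ _ (fun j _ => hmon j)
  have hm : (X ^ (i 0) * ∏ j, g j).Monic := (monic_X_pow _).mul hPm
  have hn : (X ^ (i 0) * ∏ j, g j).natDegree = f.natDegree := by
    rw [(monic_X_pow _).natDegree_mul hPm, natDegree_X_pow,
      natDegree_prod_of_monic _ _ (fun j _ => hmon j), ← hNP.last,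
      ← sum_diff s i hNP.mono.monotone, add_comm]
    simp only [hdeg]
  refine ⟨f.leadingCoeff, g, leadingCoeff_ne_zero.2 hf, ?_, fun j => ⟨hmon j, hdeg j, hroot j⟩⟩
  rw [mul_assoc]
  exact eq_leadingCoeff_mul_of_monic_of_dvd_of_natDegree_le hm hd hn.ge

end ClusterPicture
end

section
/- Let f ∈ K[x] with f(0) ≠ 0, and let f = c·g_1⋯g_s be the Newton polygon factorization, i.e. c ∈ K^×, each g_j ∈ K[x] is monic, NP(g_j) consists of a single edge of slope ρ_j, and ρ_1 < ρ_2 < … < ρ_s are the slopes of the edges of NP(f). Then f is NP-regular if and only if g_j is NP-regular for every j = 1,…,s. -/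
open Polynomial
open scoped Classical

namespace ClusterPicture

variable {K Kbar : Type*} [Field K] [Field Kbar] [Algebra K Kbar]

/-! ### Helper lemmas on the valuation -/

lemma v_exists (S : Setup K Kbar) {x : Kbar} (hx : x ≠ 0) :
    ∃ q : ℚ, S.v x = ((q : ℚ) : WithTop ℚ) := by
  have h : S.v x ≠ ⊤ := fun h => hx ((S.v_top_iff x).mp h)
  lift S.v x to ℚ using h with q
  exact ⟨q, rfl⟩

lemma ne_zero_of_v (S : Setup K Kbar) {x : Kbar} {q : ℚ}
    (h : S.v x = ((q : ℚ) : WithTop ℚ)) : x ≠ 0 := by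
  intro hx
  rw [(S.v_top_iff x).mpr hx] at h
  exact WithTop.coe_ne_top h.symm

lemma v_mul_coe (S : Setup K Kbar) {x y : Kbar} {p q : ℚ}
    (hx : S.v x = ((p : ℚ) : WithTop ℚ)) (hy : S.v y = ((q : ℚ) : WithTop ℚ)) :
    S.v (x * y) = ((p + q : ℚ) : WithTop ℚ) := by
  rw [S.v_mul, hx, hy]; rfl

lemma v_inv_coe (S : Setup K Kbar) {x : Kbar} {p : ℚ}
    (hx : S.v x = ((p : ℚ) : WithTop ℚ)) : S.v x⁻¹ = ((-p : ℚ) : WithTop ℚ) := by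
  have hx0 := ne_zero_of_v S hx
  obtain ⟨q, hq⟩ := v_exists S (inv_ne_zero hx0)
  have h := v_mul_coe S hx hq
  rw [mul_inv_cancel₀ hx0, S.v_one] at h
  have h' : (0 : ℚ) = p + q := by exact_mod_cast h
  rw [hq, show q = -p by linarith]

lemma v_pow_coe (S : Setup K Kbar) {x : Kbar} {p : ℚ}
    (hx : S.v x = ((p : ℚ) : WithTop ℚ)) (n : ℕ) :
    S.v (x ^ n) = (((n : ℚ) * p : ℚ) : WithTop ℚ) := by
  induction n with
  | zero => simpa using S.v_one
  | succ n ih =>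
    rw [pow_succ, v_mul_coe S ih hx]
    congr 1
    push_cast
    ring

lemma v_zpow_coe (S : Setup K Kbar) {x : Kbar} {p : ℚ}
    (hx : S.v x = ((p : ℚ) : WithTop ℚ)) (n : ℤ) :
    S.v (x ^ n) = (((n : ℚ) * p : ℚ) : WithTop ℚ) := by
  cases n with
  | ofNat n => simpa using v_pow_coe S hx n
  | negSucc n =>
    rw [zpow_negSucc, v_inv_coe S (v_pow_coe S hx (n + 1))]
    congr 1
    push_cast
    ring

lemma exists_t (S : Setup K Kbar) (π : K) (hπ : S.vK π = ((1 : ℚ) : WithTop ℚ)) (σ : ℚ) :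
    ∃ t : Kbar, S.v t = ((σ : ℚ) : WithTop ℚ) ∧
      t ^ σ.den = (algebraMap K Kbar π) ^ σ.num := by
  have := S.algClosed
  obtain ⟨t, ht⟩ := IsAlgClosed.exists_pow_nat_eq ((algebraMap K Kbar π) ^ σ.num) σ.den_pos
  refine ⟨t, ?_, ht⟩
  have hπ' : S.v (algebraMap K Kbar π) = ((1 : ℚ) : WithTop ℚ) := hπ
  have hv := v_zpow_coe S hπ' σ.num
  have ht0 : t ≠ 0 := by
    intro h0
    rw [← ht, h0, zero_pow σ.den_nz] at hv
    exact ne_zero_of_v S hv rfl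
  obtain ⟨q, hq⟩ := v_exists S ht0
  have h2 := v_pow_coe S hq σ.den
  rw [ht, hv] at h2
  have h3 : (σ.num : ℚ) * 1 = σ.den * q := by exact_mod_cast h2
  rw [hq]
  congr 1
  have h4 : (σ.den : ℚ) ≠ 0 := by exact_mod_cast σ.den_nz
  have h5 := Rat.mul_den_eq_num σ
  apply mul_left_cancel₀ h4
  linarith

/-! ### The residue ring -/

lemma mk_eq_zero_iff (S : Setup K Kbar) (x : intRing S) :
    Ideal.Quotient.mk (maxIdeal S) x = 0 ↔ (0 : WithTop ℚ) < S.v (x : Kbar) :=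
  Ideal.Quotient.eq_zero_iff_mem

lemma mk_ne_zero_iff (S : Setup K Kbar) (x : intRing S) :
    Ideal.Quotient.mk (maxIdeal S) x ≠ 0 ↔ S.v (x : Kbar) = ((0 : ℚ) : WithTop ℚ) := by
  rw [Ne, mk_eq_zero_iff, not_lt]
  exact ⟨fun h => le_antisymm h x.2, fun h => h.le⟩

lemma residue_isUnit (S : Setup K Kbar) {x : Residue S} (hx : x ≠ 0) : IsUnit x := by
  obtain ⟨y, rfl⟩ := Ideal.Quotient.mk_surjective x
  have hy := (mk_ne_zero_iff S y).mp hx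
  have hi := v_inv_coe S hy
  have hmem : (y : Kbar)⁻¹ ∈ intRing S := by
    rw [mem_intRing, hi]; simp
  refine IsUnit.of_mul_eq_one (Ideal.Quotient.mk (maxIdeal S) ⟨(y : Kbar)⁻¹, hmem⟩) ?_
  rw [← map_mul, ← map_one (Ideal.Quotient.mk (maxIdeal S))]
  congr 1
  apply Subtype.ext
  exact mul_inv_cancel₀ (ne_zero_of_v S hy)

lemma residue_nontrivial (S : Setup K Kbar) : Nontrivial (Residue S) := by
  refine ⟨1, 0, ?_⟩
  rw [← map_one (Ideal.Quotient.mk (maxIdeal S)), mk_ne_zero_iff]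
  exact S.v_one

lemma residue_noZeroDivisors (S : Setup K Kbar) : NoZeroDivisors (Residue S) := by
  refine ⟨fun {a b} hab => ?_⟩
  by_contra h
  push Not at h
  exact h.2 (by simpa [hab] using (residue_isUnit S h.1).mul_right_eq_zero.mp hab)

lemma residue_isDomain (S : Setup K Kbar) : IsDomain (Residue S) := by
  have := residue_nontrivial S
  have := residue_noZeroDivisors S
  exact NoZeroDivisors.to_isDomain _

/-! ### Reduction of a polynomial with respect to a slope -/

/-- `P` is the reduction of `f` after scaling the variable by `t`; `w` is the Gauss valuation,
`a` and `b` the order and the degree of the reduction. -/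
def IsRed (S : Setup K Kbar) (t : Kbar) (f : K[X]) (w : ℚ) (a b : ℕ)
    (P : Polynomial (Residue S)) : Prop :=
  (∃ (e : Kbar) (F : Polynomial (intRing S)), S.v e = ((-w : ℚ) : WithTop ℚ) ∧
    (∀ m, (F.coeff m : Kbar) = e * algebraMap K Kbar (f.coeff m) * t⁻¹ ^ m) ∧
    P = F.map (Ideal.Quotient.mk (maxIdeal S))) ∧
  P ≠ 0 ∧ P.natTrailingDegree = a ∧ P.natDegree = b

lemma IsRed.mul {S : Setup K Kbar} {t : Kbar} {f g : K[X]} {w w' : ℚ} {a b a' b' : ℕ}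
    {P Q : Polynomial (Residue S)} (hf : IsRed S t f w a b P) (hg : IsRed S t g w' a' b' Q) :
    IsRed S t (f * g) (w + w') (a + a') (b + b') (P * Q) := by
  have := residue_isDomain S
  obtain ⟨⟨e, F, he, hF, rfl⟩, hP, ha, hb⟩ := hf
  obtain ⟨⟨e', G, he', hG, rfl⟩, hQ, ha', hb'⟩ := hg
  refine ⟨⟨e * e', F * G, ?_, ?_, by rw [Polynomial.map_mul]⟩, mul_ne_zero hP hQ, ?_, ?_⟩
  · rw [v_mul_coe S he he']; congr 1; ring
  · intro m
    rw [coeff_mul, coeff_mul, map_sum, Finset.mul_sum, Finset.sum_mul]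
    push_cast
    refine Finset.sum_congr rfl fun x hx => ?_
    rw [hF, hG, ← Finset.HasAntidiagonal.mem_antidiagonal.mp hx, pow_add]
    change _ = e * e' * (algebraMap K Kbar _ * algebraMap K Kbar _) * _
    ring
  · rw [natTrailingDegree_mul hP hQ, ha, ha']
  · rw [natDegree_mul hP hQ, hb, hb']

lemma IsRed.const (S : Setup K Kbar) (t : Kbar) {u : K} {q : ℚ}
    (hq : S.vK u = ((q : ℚ) : WithTop ℚ)) : IsRed S t (C u) q 0 0 1 := by
  have := residue_isDomain S
  have hu : algebraMap K Kbar u ≠ 0 := ne_zero_of_v S hq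
  refine ⟨⟨(algebraMap K Kbar u)⁻¹, 1, v_inv_coe S hq, ?_, by simp⟩, one_ne_zero, by simp, by simp⟩
  intro m
  rw [coeff_C, coeff_one]
  by_cases hm : m = 0
  · subst hm; simp [hu]
  · simp [hm]

lemma IsRed.prod {S : Setup K Kbar} {t : Kbar} {ι : Type*} (s : Finset ι) {f : ι → K[X]}
    {w : ι → ℚ} {a b : ι → ℕ} {P : ι → Polynomial (Residue S)}
    (h : ∀ i, IsRed S t (f i) (w i) (a i) (b i) (P i)) :
    IsRed S t (∏ i ∈ s, f i) (∑ i ∈ s, w i) (∑ i ∈ s, a i) (∑ i ∈ s, b i) (∏ i ∈ s, P i) := by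
  induction s using Finset.induction_on with
  | empty =>
    simp only [Finset.prod_empty, Finset.sum_empty]
    have : S.vK (1 : K) = ((0 : ℚ) : WithTop ℚ) := by
      unfold Setup.vK; rw [map_one, S.v_one]; rfl
    simpa using IsRed.const S t this
  | insert i s hi ih =>
    rw [Finset.prod_insert hi, Finset.sum_insert hi, Finset.sum_insert hi, Finset.sum_insert hi,
      Finset.prod_insert hi]
    exact (h i).mul ih

lemma IsRed.val {S : Setup K Kbar} {t : Kbar} {σ : ℚ} (ht : S.v t = ((σ : ℚ) : WithTop ℚ))
    {f : K[X]} {w : ℚ} {a b : ℕ} {P : Polynomial (Residue S)} (h : IsRed S t f w a b P)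
    (m : ℕ) {q : ℚ} (hq : S.vK (f.coeff m) = ((q : ℚ) : WithTop ℚ)) :
    w + σ * m ≤ q ∧ (P.coeff m ≠ 0 ↔ q = w + σ * m) := by
  obtain ⟨⟨e, F, he, hF, rfl⟩, -⟩ := h
  have hv : S.v (F.coeff m : Kbar) = ((-w + q + m * (-σ) : ℚ) : WithTop ℚ) := by
    rw [hF m]
    exact v_mul_coe S (v_mul_coe S he hq) (v_pow_coe S (v_inv_coe S ht) m)
  have h0 : (0 : WithTop ℚ) ≤ S.v (F.coeff m : Kbar) := (F.coeff m).2
  rw [coeff_map, mk_ne_zero_iff]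
  rw [hv] at h0 ⊢
  have h0' : (0 : ℚ) ≤ -w + q + m * (-σ) := by exact_mod_cast h0
  refine ⟨by linarith, ?_⟩
  rw [WithTop.coe_inj]
  constructor <;> intro h <;> linarith

lemma IsRed.val_of_ne {S : Setup K Kbar} {t : Kbar} {σ : ℚ} (ht : S.v t = ((σ : ℚ) : WithTop ℚ))
    {f : K[X]} {w : ℚ} {a b : ℕ} {P : Polynomial (Residue S)} (h : IsRed S t f w a b P)
    {m : ℕ} (hm : P.coeff m ≠ 0) :
    S.vK (f.coeff m) = ((w + σ * m : ℚ) : WithTop ℚ) := by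
  have hne : algebraMap K Kbar (f.coeff m) ≠ 0 := by
    obtain ⟨⟨e, F, he, hF, rfl⟩, -⟩ := h
    intro h0
    apply hm
    have : F.coeff m = 0 := by
      apply Subtype.ext
      rw [hF m, h0]; simp
    rw [coeff_map, this, map_zero]
  obtain ⟨q, hq⟩ := v_exists S hne
  have := ((h.val ht m hq).2).mp hm
  rw [← this]; exact hq

lemma IsRed.coeff_a {S : Setup K Kbar} {t : Kbar}
    {f : K[X]} {w : ℚ} {a b : ℕ} {P : Polynomial (Residue S)} (h : IsRed S t f w a b P) :
    P.coeff a ≠ 0 := by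
  obtain ⟨-, hP, rfl, -⟩ := h
  simpa using hP

lemma IsRed.coeff_b {S : Setup K Kbar} {t : Kbar}
    {f : K[X]} {w : ℚ} {a b : ℕ} {P : Polynomial (Residue S)} (h : IsRed S t f w a b P) :
    P.coeff b ≠ 0 := by
  obtain ⟨-, hP, -, rfl⟩ := h
  simpa using hP

lemma exists_isRed (S : Setup K Kbar) {t : Kbar} {σ : ℚ} (ht : S.v t = ((σ : ℚ) : WithTop ℚ))
    (f : K[X]) (w : ℚ) (a b : ℕ)
    (hle : ∀ m q, S.vK (f.coeff m) = ((q : ℚ) : WithTop ℚ) → w + σ * m ≤ q)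
    (hlt : ∀ m q, S.vK (f.coeff m) = ((q : ℚ) : WithTop ℚ) → q = w + σ * m → a ≤ m ∧ m ≤ b)
    (ha : S.vK (f.coeff a) = ((w + σ * a : ℚ) : WithTop ℚ))
    (hb : S.vK (f.coeff b) = ((w + σ * b : ℚ) : WithTop ℚ)) :
    ∃ P, IsRed S t f w a b P := by
  have ht0 := ne_zero_of_v S ht
  have hta := v_pow_coe S (v_inv_coe S ht) a
  set e : Kbar := (algebraMap K Kbar (f.coeff a) * t⁻¹ ^ a)⁻¹ with he_def
  have he : S.v e = ((-w : ℚ) : WithTop ℚ) := by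
    rw [he_def, v_inv_coe S (v_mul_coe S ha hta)]
    congr 1; ring
  set p : Kbar[X] := C e * (f.map (algebraMap K Kbar)).comp (C t⁻¹ * X) with hp
  have hpc : ∀ m, p.coeff m = e * algebraMap K Kbar (f.coeff m) * t⁻¹ ^ m := by
    intro m
    rw [hp, coeff_C_mul, comp_C_mul_X_coeff, coeff_map]; ring
  have hmem : ∀ m, p.coeff m ∈ intRing S := by
    intro m
    rw [mem_intRing]
    by_cases h0 : p.coeff m = 0
    · rw [h0, (S.v_top_iff 0).mpr rfl]; exact le_top
    · have hne : algebraMap K Kbar (f.coeff m) ≠ 0 := by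
        intro h1; apply h0; rw [hpc, h1]; simp
      obtain ⟨q, hq⟩ := v_exists S hne
      rw [hpc, v_mul_coe S (v_mul_coe S he hq) (v_pow_coe S (v_inv_coe S ht) m)]
      have := hle m q hq
      have h2 : (0 : ℚ) ≤ -w + q + m * -σ := by linarith
      exact_mod_cast h2
  have hsub : (↑p.coeffs : Set Kbar) ⊆ intRing S := by
    intro x hx
    obtain ⟨n, -, rfl⟩ := mem_coeffs_iff.mp hx
    exact hmem n
  have hF : ∀ m, ((p.toSubring (intRing S) hsub).coeff m : Kbar) =
      e * algebraMap K Kbar (f.coeff m) * t⁻¹ ^ m := by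
    intro m; rw [coeff_toSubring, hpc]
  set P := (p.toSubring (intRing S) hsub).map (Ideal.Quotient.mk (maxIdeal S)) with hPdef
  have hcoe : ∀ m q, S.vK (f.coeff m) = ((q : ℚ) : WithTop ℚ) → q = w + σ * m →
      P.coeff m ≠ 0 := by
    intro m q hq hqm
    rw [hPdef, coeff_map, mk_ne_zero_iff, hF,
      v_mul_coe S (v_mul_coe S he hq) (v_pow_coe S (v_inv_coe S ht) m)]
    congr 1; rw [hqm]; ring
  have hconv : ∀ m, P.coeff m ≠ 0 → a ≤ m ∧ m ≤ b := by
    intro m hm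
    have hne : algebraMap K Kbar (f.coeff m) ≠ 0 := by
      intro h0
      apply hm
      have : (p.toSubring (intRing S) hsub).coeff m = 0 := by
        apply Subtype.ext
        rw [hF m, h0]; simp
      rw [hPdef, coeff_map, this, map_zero]
    obtain ⟨q, hq⟩ := v_exists S hne
    refine hlt m q hq ?_
    rw [hPdef, coeff_map, mk_ne_zero_iff, hF,
      v_mul_coe S (v_mul_coe S he hq) (v_pow_coe S (v_inv_coe S ht) m), WithTop.coe_inj] at hm
    linarith
  have hPa := hcoe a _ ha rfl
  have hPb := hcoe b _ hb rfl
  have hP0 : P ≠ 0 := by intro h; apply hPa; rw [h, coeff_zero]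
  refine ⟨P, ⟨e, _, he, hF, rfl⟩, hP0, ?_, ?_⟩
  · apply le_antisymm (natTrailingDegree_le_of_ne_zero hPa)
    exact (hconv _ (by simpa using hP0)).1
  · apply le_antisymm _ (le_natDegree_of_ne_zero hPb)
    exact (hconv _ (by simpa using hP0)).2

/-- The reduced edge polynomial extracted from the reduction `P`. -/
noncomputable def edgePoly {S : Setup K Kbar} (n a b : ℕ) (P : Polynomial (Residue S)) :
    Polynomial (Residue S) :=
  ∑ j ∈ Finset.range ((b - a) / n + 1), C (P.coeff (n * j + a)) * X ^ j

lemma separable_C_mul_iff' {R : Type*} [CommRing R] {x : R} (hx : IsUnit x) (p : R[X]) :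
    (C x * p).Separable ↔ p.Separable :=
  ⟨fun h => h.of_mul_right, fun h => Separable.unit_mul (isUnit_C.mpr hx) h⟩

/-- An edge of the Newton polygon is read off from the reduction. -/
lemma edge_data {S : Setup K Kbar} {f : K[X]} {s : ℕ} {i : Fin (s + 1) → ℕ}
    {c : Fin (s + 1) → ℚ} (hN : IsNPVertices S f s i c) (j : Fin s)
    {t : Kbar} (ht : S.v t = ((NPslope i c j : ℚ) : WithTop ℚ))
    {w : ℚ} {a b : ℕ} {P : Polynomial (Residue S)} (h : IsRed S t f w a b P) :
    a = i j.castSucc ∧ b = i j.succ ∧ c j.castSucc = w + NPslope i c j * a := by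
  have hpos : ∀ k : Fin s, (0 : ℚ) < (i k.succ : ℚ) - (i k.castSucc : ℚ) := by
    intro k
    have := hN.mono (Fin.castSucc_lt_succ (i := k))
    have : (i k.castSucc : ℚ) < i k.succ := by exact_mod_cast this
    linarith
  have hsl : ∀ k : Fin s, c k.succ - c k.castSucc =
      NPslope i c k * ((i k.succ : ℚ) - (i k.castSucc : ℚ)) := by
    intro k
    unfold NPslope
    rw [div_mul_cancel₀ _ (hpos k).ne']
  have hsup : ∀ (k : Fin s) (m : ℕ) (q : ℚ), S.vK (f.coeff m) = ((q : ℚ) : WithTop ℚ) →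
      NPslope i c k * ((m : ℚ) - (i k.castSucc : ℚ)) ≤ q - c k.castSucc := by
    intro k m q hq
    have := hN.support k m q hq
    rw [hsl k] at this
    refine le_of_mul_le_mul_right ?_ (hpos k)
    linarith
  have hva := h.val_of_ne ht h.coeff_a
  have hvb := h.val_of_ne ht h.coeff_b
  have h1 := hsup j a _ hva
  have h2 := (h.val ht _ (hN.vert j.castSucc)).1
  have hw : c j.castSucc = w + NPslope i c j * (i j.castSucc : ℚ) := by linarith
  have hc1 := (h.val ht _ (hN.vert j.castSucc)).2.mpr hw
  have hc2 := (h.val ht _ (hN.vert j.succ)).2.mpr (by linarith [hsl j])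
  have hle1 : a ≤ i j.castSucc := by
    obtain ⟨-, -, rfl, -⟩ := h; exact natTrailingDegree_le_of_ne_zero hc1
  have hle2 : i j.succ ≤ b := by
    obtain ⟨-, -, -, rfl⟩ := h; exact le_natDegree_of_ne_zero hc2
  have hvK0 : S.vK 0 = ⊤ := by
    unfold Setup.vK; rw [map_zero]; exact (S.v_top_iff 0).mpr rfl
  have e1 : a = i j.castSucc := by
    by_contra hne
    have hlt : a < i j.castSucc := lt_of_le_of_ne hle1 hne
    by_cases hj : (j : ℕ) = 0
    · have : j.castSucc = 0 := Fin.ext hj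
      rw [this, hN.first] at hlt
      rw [coeff_eq_zero_of_lt_natTrailingDegree hlt, hvK0] at hva
      exact WithTop.coe_ne_top hva.symm
    · have hk : (j : ℕ) - 1 < s := by omega
      have hks : (⟨(j : ℕ) - 1, hk⟩ : Fin s).succ = j.castSucc := by
        apply Fin.ext; simp; omega
      set k : Fin s := ⟨(j : ℕ) - 1, hk⟩
      have hkj : k < j := by rw [Fin.lt_def]; simp [k]; omega
      have hs1 := hN.slope_mono hkj
      have hs2 := hsup k a _ hva
      have hs3 := hsl k
      rw [hks] at hs3
      have hlt' : (a : ℚ) < i j.castSucc := by exact_mod_cast hlt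
      nlinarith
  have e2 : b = i j.succ := by
    by_contra hne
    have hlt : i j.succ < b := lt_of_le_of_ne hle2 (Ne.symm hne)
    by_cases hj : (j : ℕ) + 1 = s
    · have : j.succ = Fin.last s := Fin.ext hj
      rw [this, hN.last] at hlt
      rw [coeff_eq_zero_of_natDegree_lt hlt, hvK0] at hvb
      exact WithTop.coe_ne_top hvb.symm
    · have hk : (j : ℕ) + 1 < s := by omega
      have hks : (⟨(j : ℕ) + 1, hk⟩ : Fin s).castSucc = j.succ := by
        apply Fin.ext; simp
      set k : Fin s := ⟨(j : ℕ) + 1, hk⟩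
      have hkj : j < k := by rw [Fin.lt_def]; simp [k]
      have hs1 := hN.slope_mono hkj
      have hs2 := hsup k b _ hvb
      rw [hks] at hs2
      have hs3 := hsl j
      have hlt' : (i j.succ : ℚ) < b := by exact_mod_cast hlt
      nlinarith
  exact ⟨e1, e2, by rw [e1]; exact hw⟩

lemma redEdge_separable_iff {S : Setup K Kbar} {π : K} (hπ : S.vK π = ((1 : ℚ) : WithTop ℚ))
    {f : K[X]} {t : Kbar} {σ : ℚ} (ht : S.v t = ((σ : ℚ) : WithTop ℚ))
    {w : ℚ} {a b : ℕ} {P : Polynomial (Residue S)} (h : IsRed S t f w a b P)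
    {q₁ nρ : ℤ} {n : ℕ} (htn : t ^ n = (algebraMap K Kbar π) ^ nρ)
    (hq : (q₁ : ℚ) = w + σ * a) :
    (redEdge S π f a b q₁ nρ n).Separable ↔ (edgePoly n a b P).Separable := by
  obtain ⟨⟨e, F, he, hF, rfl⟩, -⟩ := h
  have ht0 := ne_zero_of_v S ht
  have hπ' : S.v (algebraMap K Kbar π) = ((1 : ℚ) : WithTop ℚ) := hπ
  have hπ0 := ne_zero_of_v S hπ'
  set γ : Kbar := e * t⁻¹ ^ a * (algebraMap K Kbar π) ^ q₁ with hγ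
  have hvγ : S.v γ = ((0 : ℚ) : WithTop ℚ) := by
    rw [hγ, v_mul_coe S (v_mul_coe S he (v_pow_coe S (v_inv_coe S ht) a)) (v_zpow_coe S hπ' q₁)]
    congr 1; rw [hq]; ring
  have hγ0 := ne_zero_of_v S hvγ
  have hγm : γ ∈ intRing S := by rw [mem_intRing, hvγ]; simp
  have hγu : IsUnit (Ideal.Quotient.mk (maxIdeal S) ⟨γ, hγm⟩) :=
    residue_isUnit S ((mk_ne_zero_iff S _).mpr hvγ)
  rw [← separable_C_mul_iff' hγu (redEdge S π f a b q₁ nρ n)]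
  apply iff_of_eq
  congr 1
  unfold redEdge edgePoly
  rw [Finset.mul_sum]
  refine Finset.sum_congr rfl fun j _ => ?_
  rw [← mul_assoc, ← C_mul, coeff_map]
  congr 2
  set x : Kbar := algebraMap K Kbar (f.coeff (n * j + a)) *
      (algebraMap K Kbar π) ^ (-(q₁ + (j : ℤ) * nρ)) with hx
  have hγx : γ * x = F.coeff (n * j + a) := by
    have h1 : t⁻¹ ^ (n * j) = (algebraMap K Kbar π) ^ (-((j : ℤ) * nρ)) := by
      rw [inv_pow, pow_mul, htn, ← zpow_natCast, ← zpow_mul, ← zpow_neg, mul_comm]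
    rw [hF, hγ, hx, pow_add, h1, neg_add, zpow_add₀ hπ0, zpow_neg _ q₁]
    have := zpow_ne_zero q₁ hπ0
    field_simp
  have hxv : (0 : WithTop ℚ) ≤ S.v x := by
    have h1 : (0 : WithTop ℚ) ≤ S.v (F.coeff (n * j + a) : Kbar) := (F.coeff (n * j + a)).2
    rw [← hγx, S.v_mul, hvγ] at h1
    simpa using h1
  rw [red, dif_pos hxv, ← map_mul]
  congr 1
  exact Subtype.ext hγx

lemma edgePoly_mul {S : Setup K Kbar} (n a b x : ℕ) (κ : Residue S) (P : Polynomial (Residue S)) :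
    edgePoly n (a + x) (b + x) (P * (C κ * X ^ x)) = C κ * edgePoly n a b P := by
  unfold edgePoly
  rw [Finset.mul_sum, Nat.add_sub_add_right]
  refine Finset.sum_congr rfl fun j _ => ?_
  rw [← add_assoc, ← mul_assoc, coeff_mul_X_pow, coeff_mul_C, ← mul_assoc, ← C_mul, mul_comm κ]

lemma eq_monomial {R : Type*} [CommRing R] {P : R[X]} {a : ℕ} (h1 : P.natTrailingDegree = a)
    (h2 : P.natDegree = a) : P = C (P.coeff a) * X ^ a := by
  ext m
  rw [coeff_C_mul_X_pow]
  split_ifs with h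
  · rw [h]
  · rcases lt_or_gt_of_ne h with h | h
    · exact coeff_eq_zero_of_lt_natTrailingDegree (h1 ▸ h)
    · exact coeff_eq_zero_of_natDegree_lt (h2 ▸ h)

/-- Reduction of a polynomial with a single edge. -/
lemma single_red (S : Setup K Kbar) {t : Kbar} {σ : ℚ} (ht : S.v t = ((σ : ℚ) : WithTop ℚ))
    (g : K[X]) (ρ : ℚ)
    (hedge : IsNPVertices S g 1 ![0, g.natDegree] ![-ρ * (g.natDegree : ℚ), 0]) :
    0 < g.natDegree ∧ ∃ P, IsRed S t g (-(max ρ σ) * g.natDegree)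
      (if ρ < σ then g.natDegree else 0) (if σ < ρ then 0 else g.natDegree) P := by
  set d := g.natDegree with hd
  have hd0 : 0 < d := by
    have := hedge.mono (show (0 : Fin 2) < 1 by decide)
    simpa using this
  have hd0' : (0 : ℚ) < d := by exact_mod_cast hd0
  refine ⟨hd0, ?_⟩
  have hv0 : S.vK (g.coeff 0) = ((-ρ * d : ℚ) : WithTop ℚ) := by simpa using hedge.vert 0
  have hvd : S.vK (g.coeff d) = ((0 : ℚ) : WithTop ℚ) := by simpa using hedge.vert 1
  have hsup : ∀ (m : ℕ) (q : ℚ), S.vK (g.coeff m) = ((q : ℚ) : WithTop ℚ) →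
      (m : ℚ) ≤ d ∧ ρ * (m - d) ≤ q := by
    intro m q hq
    constructor
    · by_contra hlt
      push Not at hlt
      have hlt' : d < m := by exact_mod_cast hlt
      rw [coeff_eq_zero_of_natDegree_lt hlt'] at hq
      unfold Setup.vK at hq
      rw [map_zero] at hq
      exact ne_zero_of_v S hq rfl
    · have := hedge.support 0 m q hq
      simp at this
      refine le_of_mul_le_mul_right ?_ hd0'
      linarith
  apply exists_isRed S ht
  · intro m q hq
    obtain ⟨h1, h2⟩ := hsup m q hq
    have hm : (0 : ℚ) ≤ m := Nat.cast_nonneg m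
    rcases le_total ρ σ with h | h
    · rw [max_eq_right h]; nlinarith
    · rw [max_eq_left h]; nlinarith
  · intro m q hq hqm
    obtain ⟨h1, h2⟩ := hsup m q hq
    have hm : (0 : ℚ) ≤ m := Nat.cast_nonneg m
    have h1' : m ≤ d := by exact_mod_cast h1
    rcases lt_trichotomy ρ σ with h | h | h
    · rw [max_eq_right h.le] at hqm
      rw [if_pos h, if_neg h.not_gt]
      refine ⟨?_, h1'⟩
      have : (d : ℚ) ≤ m := by
        by_contra hc; push Not at hc; nlinarith
      exact_mod_cast this
    · rw [if_neg h.not_lt, if_neg h.symm.not_lt]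
      exact ⟨Nat.zero_le _, h1'⟩
    · rw [max_eq_left h.le] at hqm
      rw [if_neg h.not_gt, if_pos h]
      refine ⟨Nat.zero_le _, ?_⟩
      have : (m : ℚ) ≤ 0 := by
        by_contra hc; push Not at hc; nlinarith
      exact_mod_cast this
  · split_ifs with h
    · rw [hvd, max_eq_right h.le]; congr 1; ring
    · rw [hv0, max_eq_left (not_lt.mp h)]; congr 1; simp
  · split_ifs with h
    · rw [hv0, max_eq_left h.le]; congr 1; simp
    · rw [hvd, max_eq_right (not_lt.mp h)]; congr 1; ring

lemma slope_eq_of_lt {ρ σ : ℚ} {d : ℕ}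
    (h : (if ρ < σ then d else 0) < (if σ < ρ then 0 else d)) : ρ = σ := by
  rcases lt_trichotomy ρ σ with h1 | h1 | h1
  · rw [if_pos h1, if_neg h1.not_gt] at h; omega
  · exact h1
  · rw [if_neg h1.not_gt, if_pos h1] at h; omega

lemma nρ_eq_num {σ : ℚ} {n : ℕ} {nρ : ℤ} (hn : n = σ.den) (h : (nρ : ℚ) = (n : ℚ) * σ) :
    nρ = σ.num := by
  have h5 := Rat.mul_den_eq_num σ
  rw [hn] at h
  have : (nρ : ℚ) = (σ.num : ℚ) := by linarith
  exact_mod_cast this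

lemma isRed_fact {S : Setup K Kbar} {t : Kbar} {f : K[X]} {s : ℕ} {u : K} {g : Fin s → K[X]}
    (hfact : f = Polynomial.C u * ∏ j, g j) {qu : ℚ} (hqu : S.vK u = ((qu : ℚ) : WithTop ℚ))
    {w : Fin s → ℚ} {a b : Fin s → ℕ} {P : Fin s → Polynomial (Residue S)}
    (h : ∀ l, IsRed S t (g l) (w l) (a l) (b l) (P l)) :
    IsRed S t f (qu + ∑ l, w l) (∑ l, a l) (∑ l, b l) (∏ l, P l) := by
  have := (IsRed.const S t hqu).mul (IsRed.prod Finset.univ h)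
  rwa [← hfact, zero_add, zero_add, one_mul] at this

lemma edge_compare {S : Setup K Kbar} {t : Kbar} {s : ℕ} {g : Fin s → K[X]}
    {ρ : Fin s → ℚ} (hρmono : StrictMono ρ) {σ : ℚ} {w : Fin s → ℚ} {d : Fin s → ℕ}
    {P : Fin s → Polynomial (Residue S)}
    (hP : ∀ l, IsRed S t (g l) (w l) (if ρ l < σ then d l else 0)
      (if σ < ρ l then 0 else d l) (P l)) {k : Fin s} (hσ : ρ k = σ) {n : ℕ} :
    (edgePoly n (∑ l, if ρ l < σ then d l else 0) (∑ l, if σ < ρ l then 0 else d l)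
      (∏ l, P l)).Separable ↔
    (edgePoly n (if ρ k < σ then d k else 0) (if σ < ρ k then 0 else d k) (P k)).Separable := by
  have hQ := IsRed.prod (Finset.univ.erase k) hP
  set x := ∑ l ∈ Finset.univ.erase k, (if ρ l < σ then d l else 0) with hx
  have hx2 : ∑ l ∈ Finset.univ.erase k, (if σ < ρ l then 0 else d l) = x := by
    refine Finset.sum_congr rfl fun l hl => ?_
    have hlk : ρ l ≠ σ := by
      rw [← hσ]
      exact fun h => (Finset.ne_of_mem_erase hl) (hρmono.injective h)
    rcases lt_or_gt_of_ne hlk with h | h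
    · rw [if_pos h, if_neg h.not_gt]
    · rw [if_neg h.not_gt, if_pos h]
  rw [hx2] at hQ
  have hκ := residue_isUnit S hQ.coeff_a
  have hmono := eq_monomial hQ.2.2.1 hQ.2.2.2
  rw [← Finset.add_sum_erase _ _ (Finset.mem_univ k), ← Finset.add_sum_erase _
    (fun l => if σ < ρ l then 0 else d l) (Finset.mem_univ k), hx2, ← hx,
    ← Finset.mul_prod_erase _ _ (Finset.mem_univ k), hmono, edgePoly_mul,
    separable_C_mul_iff' hκ]

/-- Vertex indices of the Newton polygon of the product. -/
def vI {s : ℕ} (d : Fin s → ℕ) (j : Fin (s + 1)) : ℕ :=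
  ∑ l : Fin s, if l.castSucc < j then d l else 0

/-- Vertex heights of the Newton polygon of the product. -/
def vC {s : ℕ} (qu : ℚ) (d : Fin s → ℕ) (ρ : Fin s → ℚ) (j : Fin (s + 1)) : ℚ :=
  qu + ∑ l : Fin s, if l.castSucc < j then 0 else -ρ l * (d l : ℚ)

lemma vI_succ {s : ℕ} (d : Fin s → ℕ) (k : Fin s) :
    vI d k.succ = vI d k.castSucc + d k := by
  unfold vI
  rw [← Finset.add_sum_erase _ _ (Finset.mem_univ k), ← Finset.add_sum_erase Finset.univ
    (fun l : Fin s => if l.castSucc < k.castSucc then d l else 0) (Finset.mem_univ k)]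
  have : ∑ l ∈ Finset.univ.erase k, (if l.castSucc < k.succ then d l else 0) =
      ∑ l ∈ Finset.univ.erase k, (if l.castSucc < k.castSucc then d l else 0) := by
    refine Finset.sum_congr rfl fun l hl => ?_
    have hne := Fin.val_ne_of_ne (Finset.ne_of_mem_erase hl)
    refine if_congr ?_ rfl rfl
    simp only [Fin.lt_def, Fin.val_castSucc, Fin.val_succ]
    omega
  rw [this, if_pos Fin.castSucc_lt_succ, if_neg (lt_irrefl _)]
  omega

lemma vC_succ {s : ℕ} (qu : ℚ) (d : Fin s → ℕ) (ρ : Fin s → ℚ) (k : Fin s) :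
    vC qu d ρ k.succ = vC qu d ρ k.castSucc + ρ k * (d k : ℚ) := by
  unfold vC
  rw [← Finset.add_sum_erase _ _ (Finset.mem_univ k), ← Finset.add_sum_erase Finset.univ
    (fun l : Fin s => if l.castSucc < k.castSucc then (0 : ℚ) else -ρ l * (d l : ℚ))
    (Finset.mem_univ k)]
  have : ∑ l ∈ Finset.univ.erase k, (if l.castSucc < k.succ then (0 : ℚ) else -ρ l * (d l : ℚ)) =
      ∑ l ∈ Finset.univ.erase k,
        (if l.castSucc < k.castSucc then (0 : ℚ) else -ρ l * (d l : ℚ)) := by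
    refine Finset.sum_congr rfl fun l hl => ?_
    have hne := Fin.val_ne_of_ne (Finset.ne_of_mem_erase hl)
    refine if_congr ?_ rfl rfl
    simp only [Fin.lt_def, Fin.val_castSucc, Fin.val_succ]
    omega
  rw [this, if_pos Fin.castSucc_lt_succ, if_neg (lt_irrefl _)]
  ring

lemma vertices_slope (s : ℕ) (qu : ℚ) (d : Fin s → ℕ) (hd0 : ∀ l, 0 < d l) (ρ : Fin s → ℚ)
    (k : Fin s) : NPslope (vI d) (vC qu d ρ) k = ρ k := by
  have : (d k : ℚ) ≠ 0 := by exact_mod_cast (hd0 k).ne'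
  unfold NPslope
  rw [vI_succ, vC_succ]
  push_cast
  rw [add_sub_cancel_left, add_sub_cancel_left, mul_div_cancel_right₀ _ this]

/-- The Newton polygon of the product. -/
lemma exists_vertices
    (S : Setup K Kbar) (π : K) (hπ : S.vK π = ((1 : ℚ) : WithTop ℚ))
    (f : K[X]) (h0 : f.coeff 0 ≠ 0)
    (s : ℕ) (u : K) (qu : ℚ) (hqu : S.vK u = ((qu : ℚ) : WithTop ℚ)) (g : Fin s → K[X])
    (hfact : f = Polynomial.C u * ∏ j, g j)
    (hmonic : ∀ j, (g j).Monic)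
    (ρ : Fin s → ℚ) (hρmono : StrictMono ρ)
    (hedge : ∀ j, IsNPVertices S (g j) 1 ![0, (g j).natDegree]
      ![-(ρ j) * ((g j).natDegree : ℚ), 0])
    (hd0 : ∀ l, 0 < (g l).natDegree) :
    IsNPVertices S f s (vI fun l => (g l).natDegree) (vC qu (fun l => (g l).natDegree) ρ) := by
  set d : Fin s → ℕ := fun l => (g l).natDegree with hd
  have hu : u ≠ 0 := by
    have h := ne_zero_of_v S hqu
    simpa using h
  have hmon : (∏ j, g j).Monic := monic_prod_of_monic _ _ fun j _ => hmonic j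
  have hdeg : f.natDegree = ∑ l, d l := by
    rw [hfact, natDegree_C_mul hu, natDegree_prod_of_monic _ _ fun j _ => hmonic j]
  have hlead : f.coeff (∑ l, d l) = u := by
    rw [← hdeg, coeff_natDegree, hfact, leadingCoeff_mul, leadingCoeff_C, hmon.leadingCoeff,
      mul_one]
  have hIlast : vI d (Fin.last s) = ∑ l, d l := by
    unfold vI
    exact Finset.sum_congr rfl fun l _ => if_pos (Fin.castSucc_lt_last l)
  have hkey : ∀ k : Fin s, ∃ w : ℚ, vC qu d ρ k.castSucc = w + ρ k * (vI d k.castSucc : ℚ) ∧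
      S.vK (f.coeff (vI d k.castSucc)) = ((vC qu d ρ k.castSucc : ℚ) : WithTop ℚ) ∧
      ∀ (m : ℕ) (q : ℚ), S.vK (f.coeff m) = ((q : ℚ) : WithTop ℚ) → w + ρ k * m ≤ q := by
    intro k
    obtain ⟨t, ht, -⟩ := exists_t S π hπ (ρ k)
    choose P hP using fun l => (single_red S ht (g l) (ρ l) (hedge l)).2
    have hf := isRed_fact hfact hqu hP
    have ha : (∑ l, if ρ l < ρ k then (g l).natDegree else 0) = vI d k.castSucc := by
      unfold vI
      refine Finset.sum_congr rfl fun l _ => if_congr ?_ rfl rfl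
      rw [hρmono.lt_iff_lt, Fin.castSucc_lt_castSucc_iff]
    have hc : vC qu d ρ k.castSucc =
        (qu + ∑ l, -(max (ρ l) (ρ k)) * ((g l).natDegree : ℚ)) + ρ k * (vI d k.castSucc : ℚ) := by
      unfold vC vI
      push_cast
      rw [Finset.mul_sum, add_assoc, ← Finset.sum_add_distrib]
      congr 1
      refine Finset.sum_congr rfl fun l _ => ?_
      simp only [Fin.castSucc_lt_castSucc_iff]
      split_ifs with h
      · rw [max_eq_right (hρmono h).le]; simp [hd]
      · rw [max_eq_left (hρmono.monotone (not_lt.mp h))]; simp [hd]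
    refine ⟨_, hc, ?_, fun m q hq => (hf.val ht m hq).1⟩
    have := hf.val_of_ne ht hf.coeff_a
    rw [ha] at this
    rw [this, hc]
  refine ⟨?_, ?_, ?_, ?_, ?_, ?_⟩
  · rw [Fin.strictMono_iff_lt_succ]
    intro k
    rw [vI_succ]
    exact Nat.lt_add_of_pos_right (hd0 k)
  · rw [natTrailingDegree_eq_zero.mpr (Or.inr h0)]
    simp [vI]
  · rw [hIlast, hdeg]
  · intro j
    induction j using Fin.lastCases with
    | last =>
      rw [hIlast, hlead, hqu]
      congr 1
      unfold vC
      rw [Finset.sum_eq_zero fun l _ => if_pos (Fin.castSucc_lt_last l), add_zero]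
    | cast k => exact (hkey k).choose_spec.2.1
  · intro x y hxy
    rw [vertices_slope s qu d hd0 ρ, vertices_slope s qu d hd0 ρ]
    exact hρmono hxy
  · intro k m q hq
    obtain ⟨w, hc, -, hsup⟩ := hkey k
    have h1 := hsup m q hq
    rw [vI_succ, vC_succ]
    push_cast
    have : (0 : ℚ) ≤ d k := Nat.cast_nonneg _
    rw [hc]
    nlinarith

/-- **NP-regularity and the Newton polygon factorisation.** Suppose `f(0) ≠ 0` and
`f = c·g_1⋯g_s` is the Newton polygon factorisation (each `g_j` monic whose Newton polygon
is a single edge of slope `ρ_j`, with `ρ_1 < … < ρ_s` the slopes of the edges of `NP(f)`).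
Then `f` is NP-regular iff every `g_j` is NP-regular. -/
theorem npRegular_iff_factors_npRegular
    (S : Setup K Kbar) (π : K) (hπ : S.vK π = ((1 : ℚ) : WithTop ℚ))
    (f : K[X]) (h0 : f.coeff 0 ≠ 0)
    (s : ℕ) (u : K) (hu : u ≠ 0) (g : Fin s → K[X])
    (hfact : f = Polynomial.C u * ∏ j, g j)
    (hmonic : ∀ j, (g j).Monic)
    (ρ : Fin s → ℚ) (hρmono : StrictMono ρ)
    (hedge : ∀ j, IsNPVertices S (g j) 1 ![0, (g j).natDegree]
      ![-(ρ j) * ((g j).natDegree : ℚ), 0]) :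
    NPRegular S π f ↔ ∀ j, NPRegular S π (g j) := by
  obtain ⟨qu, hqu⟩ : ∃ q : ℚ, S.vK u = ((q : ℚ) : WithTop ℚ) :=
    v_exists S (by simpa using hu)
  have hd0 : ∀ l, 0 < (g l).natDegree := by
    intro l
    obtain ⟨t, ht, -⟩ := exists_t S π hπ 0
    exact (single_red S ht (g l) (ρ l) (hedge l)).1
  constructor
  · intro hreg k s' i' c' hN j q₁ nρ n hq hn hnρ
    obtain ⟨t, ht, htn⟩ := exists_t S π hπ (NPslope i' c' j)
    have hnum := nρ_eq_num hn hnρ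
    rw [← hn, ← hnum] at htn
    choose P hP using fun l => (single_red S ht (g l) (ρ l) (hedge l)).2
    obtain ⟨ea, eb, ec⟩ := edge_data hN j ht (hP k)
    have hlt : i' j.castSucc < i' j.succ := hN.mono Fin.castSucc_lt_succ
    have hσ : ρ k = NPslope i' c' j := by
      rw [← ea, ← eb] at hlt
      exact slope_eq_of_lt hlt
    rw [← ea, ← eb, redEdge_separable_iff hπ ht (hP k) htn (by rw [hq, ec]),
      ← edge_compare hρmono (fun l => hP l) hσ (n := n)]
    have hf := isRed_fact hfact hqu hP
    have hNf := exists_vertices S π hπ f h0 s u qu hqu g hfact hmonic ρ hρmono hedge hd0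
    have hslope := vertices_slope s qu (fun l => (g l).natDegree) hd0 ρ k
    have ht' := ht
    rw [← hσ, ← hslope] at ht'
    obtain ⟨fa, fb, fc⟩ := edge_data hNf k ht' hf
    have hne : f.coeff (vI (fun l => (g l).natDegree) k.castSucc) ≠ 0 := by
      have := ne_zero_of_v S (hNf.vert k.castSucc)
      simpa using this
    obtain ⟨z, hz⟩ := S.v_base_int _ hne
    have hzc : (z : ℚ) = vC qu (fun l => (g l).natDegree) ρ k.castSucc := by
      have h1 := hNf.vert k.castSucc
      unfold Setup.vK at h1
      rw [hz] at h1
      exact_mod_cast h1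
    have hres := hreg s _ _ hNf k z nρ n hzc (by rw [hslope, hσ, hn])
      (by rw [hslope, hσ, hnρ])
    rw [← fa, ← fb, redEdge_separable_iff hπ ht' hf htn (by rw [hzc, fc])] at hres
    exact hres
  · intro hreg s' i' c' hN j q₁ nρ n hq hn hnρ
    obtain ⟨t, ht, htn⟩ := exists_t S π hπ (NPslope i' c' j)
    have hnum := nρ_eq_num hn hnρ
    rw [← hn, ← hnum] at htn
    choose P hP using fun l => (single_red S ht (g l) (ρ l) (hedge l)).2
    have hf := isRed_fact hfact hqu hP
    obtain ⟨fa, fb, fc⟩ := edge_data hN j ht hf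
    have hlt : i' j.castSucc < i' j.succ := hN.mono Fin.castSucc_lt_succ
    obtain ⟨k, hσ⟩ : ∃ k, ρ k = NPslope i' c' j := by
      rw [← fa, ← fb] at hlt
      obtain ⟨k, -, hk⟩ := Finset.exists_lt_of_sum_lt hlt
      exact ⟨k, slope_eq_of_lt hk⟩
    rw [← fa, ← fb, redEdge_separable_iff hπ ht hf htn (by rw [hq, fc]),
      edge_compare hρmono (fun l => hP l) hσ (n := n)]
    have hslope : NPslope ![0, (g k).natDegree] ![-(ρ k) * ((g k).natDegree : ℚ), 0] 0 = ρ k := by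
      have : ((g k).natDegree : ℚ) ≠ 0 := by exact_mod_cast (hd0 k).ne'
      simp [NPslope, this]
    have ht' := ht
    rw [← hσ, ← hslope] at ht'
    obtain ⟨ea, eb, ec⟩ := edge_data (hedge k) 0 ht' (hP k)
    have hne : (g k).coeff 0 ≠ 0 := by
      have := ne_zero_of_v S ((hedge k).vert 0)
      simpa using this
    obtain ⟨z, hz⟩ := S.v_base_int _ hne
    have hzc : (z : ℚ) = (![-(ρ k) * ((g k).natDegree : ℚ), 0] : Fin 2 → ℚ)
        (Fin.castSucc (0 : Fin 1)) := by
      have h1 := (hedge k).vert 0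
      unfold Setup.vK at h1
      have h2 : ((z : ℚ) : WithTop ℚ) =
          (((![-(ρ k) * ((g k).natDegree : ℚ), 0] : Fin 2 → ℚ) 0 : ℚ) : WithTop ℚ) := by
        rw [← h1, ← hz]; rfl
      exact_mod_cast h2
    have hres := hreg k 1 _ _ (hedge k) 0 z nρ n hzc (by rw [hslope, hσ, hn])
      (by rw [hslope, hσ, hnρ])
    rw [← ea, ← eb, redEdge_separable_iff hπ ht' (hP k) htn (by rw [hzc, ec])] at hres
    exact hres

end ClusterPicture
end

section
/- Let s be a proper cluster of f with rational centre w_s, and let t be a cluster with t ⊇ s. Then w_s is a rational centre of t and ρ_t ≤ ρ_s. If moreover s is a rational cluster and t ⊋ s, then ρ_t < ρ_s. -/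
open Polynomial
open scoped Classical

namespace ClusterPicture

variable {K Kbar : Type*} [Field K] [Field Kbar] [Algebra K Kbar]

lemma Setup.v_symm (S : Setup K Kbar) (a b : Kbar) : S.v (a - b) = S.v (b - a) := by
  rw [← S.v_neg, neg_sub]

lemma Setup.le_tri (S : Setup K Kbar) {m : WithTop ℚ} {a b c : Kbar}
    (h1 : m ≤ S.v (a - b)) (h2 : m ≤ S.v (b - c)) : m ≤ S.v (a - c) := by
  have h := S.v_add (a - b) (b - c)
  rw [sub_add_sub_cancel] at h
  exact (le_min h1 h2).trans h

/-- **Rational centres pass to larger clusters.** If `w` is a rational centre of the proper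
cluster `s` and `t ⊇ s` is a cluster, then `w` is a rational centre of `t` and
`ρ_t ≤ ρ_s`; if moreover `s` is a rational cluster and `t ⊋ s`, then `ρ_t < ρ_s`. -/
theorem rational_centre_of_larger_cluster
    (S : Setup K Kbar) (f : K[X]) (hsep : f.Separable) (hdeg : 1 ≤ f.natDegree)
    (s t : Finset Kbar) (hs : IsCluster S f s) (hproper : 1 < s.card)
    (ht : IsCluster S f t) (hst : s ⊆ t)
    (w : K) (hw : IsRationalCentre S s w) :
    IsRationalCentre S t w ∧ dminK S t w ≤ dminK S s w ∧
      (IsRationalCluster S f s → s ⊂ t → dminK S t w < dminK S s w) := by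
  obtain ⟨r, hr⟩ := hs.1
  have hmono : ∀ w' : K, dminK S t w' ≤ dminK S s w' := fun w' => Finset.inf_mono hst
  have hle : ∀ (u : Finset Kbar) (w' : K) (x : Kbar), x ∈ u →
      dminK S u w' ≤ S.v (x - algebraMap K Kbar w') := fun u w' x hx => Finset.inf_le hx
  refine ⟨fun w' => ?_, hmono w, ?_⟩
  · have h1 : dminK S t w' ≤ S.v (r - algebraMap K Kbar w) :=
      ((hmono w').trans (hw w')).trans (hle s w r hr)
    have h2 := hle t w' r (hst hr)
    rw [S.v_symm] at h2
    refine Finset.le_inf fun x hx => S.le_tri (hle t w' x hx) (S.le_tri h2 h1)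
  · rintro ⟨-, w₁, δ, hsδ⟩ hss
    obtain ⟨x, hxt, hxs⟩ := Finset.exists_of_ssubset hss
    have hδ1 : (δ : WithTop ℚ) ≤ dminK S s w₁ := by
      refine Finset.le_inf fun y hy => ?_
      rw [hsδ] at hy
      exact (Finset.mem_filter.mp hy).2
    have hδ : (δ : WithTop ℚ) ≤ dminK S s w := hδ1.trans (hw w₁)
    have hxroot : x ∈ rootFinset (Kbar := Kbar) f := by
      obtain ⟨-, z, δ', htδ⟩ := ht
      rw [htδ] at hxt
      exact (Finset.mem_filter.mp hxt).1
    refine lt_of_lt_of_le (lt_of_le_of_lt (hle t w x hxt) ?_) hδ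
    by_contra hcon
    have h1 := hδ.trans (hle s w r hr)
    rw [S.v_symm] at h1
    apply hxs
    rw [hsδ]
    exact Finset.mem_filter.mpr ⟨hxroot,
      S.le_tri (not_lt.mp hcon) (S.le_tri h1 (hδ1.trans (hle s w₁ r hr)))⟩

end ClusterPicture
end

section
/- If s is a proper cluster of f with ρ_s < d_s, then no cluster s' ⊊ s is a rational cluster. -/
open Polynomial
open scoped Classical

namespace ClusterPicture

variable {K Kbar : Type*} [Field K] [Field Kbar] [Algebra K Kbar]

/-- **No rational subclusters.** If `s` is a proper cluster with `ρ_s < d_s`, then no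
`s' ⊊ s` is a rational cluster. -/
theorem no_rational_subcluster
    (S : Setup K Kbar) (f : K[X]) (hsep : f.Separable) (hdeg : 1 ≤ f.natDegree)
    (s : Finset Kbar) (hs : IsCluster S f s) (hproper : 1 < s.card)
    (w : K) (hw : IsRationalCentre S s w)
    (hlt : dminK S s w < depth S s) :
    ∀ s' : Finset Kbar, s' ⊂ s → ¬ IsRationalCluster S f s' := by
  rintro s' hss ⟨⟨r0, hr0⟩, w', δ, hs'⟩
  obtain ⟨hsub, hns⟩ := hss
  obtain ⟨r1, hr1, hr1'⟩ := Finset.not_subset.mp hns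
  have hdep : ∀ a ∈ s, ∀ b ∈ s, depth S s ≤ S.v (a - b) := fun a ha b hb =>
    (Finset.inf_le (f := fun r => s.inf fun r' => S.v (r - r')) ha).trans
      (Finset.inf_le (f := fun r' => S.v (a - r')) hb)
  have hR : ∀ a ∈ s, a ∈ rootFinset (K := K) f := by
    obtain ⟨_, z, ε, h⟩ := hs
    intro a ha
    rw [h] at ha
    exact (Finset.mem_filter.mp ha).1
  have h0 : ((δ : ℚ) : WithTop ℚ) ≤ S.v (r0 - algebraMap K Kbar w') := by
    rw [hs'] at hr0
    exact (Finset.mem_filter.mp hr0).2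
  have htri : ∀ r : Kbar, min (S.v (r - r0)) (S.v (r0 - algebraMap K Kbar w'))
      ≤ S.v (r - algebraMap K Kbar w') := by
    intro r
    have h := S.v_add (r - r0) (r0 - algebraMap K Kbar w')
    rwa [sub_add_sub_cancel] at h
  have h1 : S.v (r1 - r0) < ((δ : ℚ) : WithTop ℚ) := by
    by_contra hc
    apply hr1'
    rw [hs']
    exact Finset.mem_filter.mpr ⟨hR r1 hr1, (le_min (not_lt.mp hc) h0).trans (htri r1)⟩
  have hd : depth S s ≤ S.v (r0 - algebraMap K Kbar w') :=
    ((hdep r1 hr1 r0 (hsub hr0)).trans h1.le).trans h0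
  have hfin : depth S s ≤ dminK S s w' :=
    Finset.le_inf fun r hr => (le_min (hdep r hr r0 (hsub hr0)) hd).trans (htri r)
  exact absurd (hfin.trans (hw w')) (not_le.mpr hlt)

end ClusterPicture
end

section
/- Let s be a proper rational cluster of f with rational centre w_s, and set s' = R ∩ {x ∈ K̄ : v(x − w_s) > ρ_s} (possibly empty). Then (|s| − |s'|)·ρ_s ∈ ℤ. -/
open Polynomial
open scoped Classical

namespace ClusterPicture

variable {K Kbar : Type*} [Field K] [Field Kbar] [Algebra K Kbar]

/-- The valuation bundled as an additive valuation. -/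
noncomputable def addVal (S : Setup K Kbar) : AddValuation Kbar (WithTop ℚ) :=
  AddValuation.of S.v ((S.v_top_iff 0).mpr rfl) S.v_one S.v_add S.v_mul

/-- Rational-valued version of the valuation (junk value at zero). -/
noncomputable def uval (S : Setup K Kbar) (x : Kbar) : ℚ := (S.v x).untopD 0

lemma v_eq_uval (S : Setup K Kbar) {x : Kbar} (hx : x ≠ 0) :
    S.v x = ((uval S x : ℚ) : WithTop ℚ) := by
  have h : S.v x ≠ ⊤ := fun h => hx ((S.v_top_iff x).mp h)
  unfold uval
  lift S.v x to ℚ using h with q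
  simp

lemma v_prod (S : Setup K Kbar) (E : Finset Kbar) (a : Kbar → Kbar) (h : ∀ e ∈ E, a e ≠ 0) :
    S.v (∏ i ∈ E, a i) = ((∑ i ∈ E, uval S (a i) : ℚ) : WithTop ℚ) := by
  induction E using Finset.induction_on with
  | empty => simpa using S.v_one
  | insert x E hx ih =>
    rw [Finset.prod_insert hx, Finset.sum_insert hx, S.v_mul,
      ih (fun e he => h e (Finset.mem_insert_of_mem he)),
      v_eq_uval S (h x (Finset.mem_insert_self _ _))]
    norm_cast

lemma sum_lt_of_card_eq (D E : Finset Kbar) (u : Kbar → ℚ) (hc : D.card = E.card) (hne : E ≠ D)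
    (h : ∀ d ∈ D \ E, ∀ e ∈ E \ D, u d < u e) : ∑ i ∈ D, u i < ∑ i ∈ E, u i := by
  have hc' : (D \ E).card = (E \ D).card := Finset.card_sdiff_comm hc
  have hnon : (D \ E).Nonempty := by
    rw [Finset.sdiff_nonempty]
    intro hsub
    exact hne (Finset.eq_of_subset_of_card_le hsub hc.ge).symm
  rw [← Finset.sum_inter_add_sum_sdiff D E, ← Finset.sum_inter_add_sum_sdiff E D,
    Finset.inter_comm]
  have key : ∑ i ∈ D \ E, u i < ∑ i ∈ E \ D, u i := by
    let φ := Finset.equivOfCardEq hc'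
    rw [← Finset.sum_coe_sort (D \ E), ← Finset.sum_coe_sort (E \ D), ← Equiv.sum_comp φ]
    haveI : Nonempty ↥(D \ E) := hnon.to_subtype
    exact Finset.sum_lt_sum_of_nonempty Finset.univ_nonempty
      (fun i _ => h i i.2 (φ i) (φ i).2)
  linarith

lemma coeff_val (S : Setup K Kbar) (T D : Finset Kbar) (a : Kbar → Kbar) (hD : D ⊆ T)
    (hfin : ∀ d ∈ D, a d ≠ 0)
    (hlt : ∀ d ∈ D, ∀ e ∈ T, e ∉ D → S.v (a d) < S.v (a e)) :
    S.v ((∏ i ∈ T, (X + C (a i))).coeff (T.card - D.card)) =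
      ((∑ i ∈ D, uval S (a i) : ℚ) : WithTop ℚ) := by
  have hcard := Finset.card_le_card hD
  rw [Finset.prod_X_add_C_coeff T a (Nat.sub_le _ _), Nat.sub_sub_self hcard]
  have hmem : D ∈ T.powersetCard D.card := Finset.mem_powersetCard.mpr ⟨hD, rfl⟩
  rw [← Finset.add_sum_erase _ _ hmem, ← v_prod S D a hfin]
  refine AddValuation.map_add_eq_of_lt_left (addVal S) ?_
  refine AddValuation.map_lt_sum (addVal S) ?_ ?_
  · change S.v _ ≠ ⊤
    rw [v_prod S D a hfin]
    exact WithTop.coe_ne_top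
  · intro E hE
    rw [Finset.mem_erase, Finset.mem_powersetCard] at hE
    obtain ⟨hne, hET, hEc⟩ := hE
    change S.v _ < S.v _
    rw [v_prod S D a hfin]
    by_cases h0 : ∃ e ∈ E, a e = 0
    · obtain ⟨e, he, h0⟩ := h0
      rw [Finset.prod_eq_zero he h0, (S.v_top_iff 0).mpr rfl]
      exact WithTop.coe_lt_top _
    · push Not at h0
      rw [v_prod S E a h0]
      refine WithTop.coe_lt_coe.mpr ?_
      refine sum_lt_of_card_eq D E _ hEc.symm hne ?_
      intro d hd e he
      rw [Finset.mem_sdiff] at hd he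
      have := hlt d hd.1 e (hET he.1) he.2
      rw [v_eq_uval S (hfin d hd.1), v_eq_uval S (h0 e he.1)] at this
      exact WithTop.coe_lt_coe.mp this

lemma shift_eq (S : Setup K Kbar) (f : K[X]) (hsep : f.Separable) (w : K) :
    (f.comp (X + C w)).map (algebraMap K Kbar) =
      C (algebraMap K Kbar f.leadingCoeff) *
        ∏ r ∈ rootFinset (Kbar := Kbar) f, (X + C (algebraMap K Kbar w - r)) := by
  haveI := S.algClosed
  have hs : (f.map (algebraMap K Kbar)).Separable := hsep.map
  have hnd : (f.map (algebraMap K Kbar)).roots.Nodup := nodup_roots hs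
  have h := (IsAlgClosed.splits (f.map (algebraMap K Kbar))).eq_prod_roots
  have h2 : ((f.map (algebraMap K Kbar)).roots.map (X - C ·)).prod =
      ∏ r ∈ rootFinset (Kbar := Kbar) f, (X - C r) := by
    unfold rootFinset
    rw [Finset.prod, Multiset.toFinset_val, hnd.dedup]
  rw [h2, leadingCoeff_map] at h
  rw [Polynomial.map_comp, h, mul_comp, C_comp, prod_comp]
  congr 1
  refine Finset.prod_congr rfl fun r _ => ?_
  simp only [Polynomial.map_add, map_X, map_C, sub_comp, X_comp, C_comp, C_sub]
  ring

lemma int_sum (S : Setup K Kbar) (f : K[X]) (hsep : f.Separable) (w : K) (D : Finset Kbar)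
    (hD : D ⊆ rootFinset f) (hfin : ∀ d ∈ D, algebraMap K Kbar w - d ≠ 0)
    (hlt : ∀ d ∈ D, ∀ e ∈ rootFinset f, e ∉ D →
      S.v (algebraMap K Kbar w - d) < S.v (algebraMap K Kbar w - e)) :
    ∃ n : ℤ, uval S (algebraMap K Kbar f.leadingCoeff) +
      ∑ i ∈ D, uval S (algebraMap K Kbar w - i) = (n : ℚ) := by
  have h := coeff_val S (rootFinset f) D (fun r => algebraMap K Kbar w - r) hD hfin hlt
  set k := (rootFinset (Kbar := Kbar) f).card - D.card
  have hc : algebraMap K Kbar ((f.comp (X + C w)).coeff k) =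
      algebraMap K Kbar f.leadingCoeff *
        (∏ r ∈ rootFinset (Kbar := Kbar) f, (X + C (algebraMap K Kbar w - r))).coeff k := by
    rw [← coeff_map, shift_eq S f hsep w, coeff_C_mul]
  have hl : algebraMap K Kbar f.leadingCoeff ≠ 0 := by
    simpa using hsep.ne_zero
  have hv : S.v (algebraMap K Kbar ((f.comp (X + C w)).coeff k)) =
      ((uval S (algebraMap K Kbar f.leadingCoeff) +
      ∑ i ∈ D, uval S (algebraMap K Kbar w - i) : ℚ) : WithTop ℚ) := by
    rw [hc, S.v_mul, h, v_eq_uval S hl]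
    norm_cast
  have hne : (f.comp (X + C w)).coeff k ≠ 0 := by
    intro h0
    rw [h0, map_zero, (S.v_top_iff 0).mpr rfl] at hv
    exact WithTop.coe_ne_top hv.symm
  obtain ⟨n, hn⟩ := S.v_base_int _ hne
  rw [hn] at hv
  exact ⟨n, (WithTop.coe_injective hv).symm⟩

/-- **Integrality of `(|s| − |s'|)·ρ_s`.** Let `s` be a proper rational cluster with rational
centre `w_s`, and let `s' = R ∩ {x : v(x − w_s) > ρ_s}`. Then `(|s| − |s'|)·ρ_s ∈ ℤ`. -/
theorem size_mul_radius_integral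
    (S : Setup K Kbar) (f : K[X]) (hsep : f.Separable) (hdeg : 1 ≤ f.natDegree)
    (s : Finset Kbar) (hs : IsRationalCluster S f s) (hproper : 1 < s.card)
    (w : K) (hw : IsRationalCentre S s w)
    (ρ : ℚ) (hρ : dminK S s w = ((ρ : ℚ) : WithTop ℚ))
    (s' : Finset Kbar)
    (hs' : s' = (rootFinset f).filter
      fun r => ((ρ : ℚ) : WithTop ℚ) < S.v (r - algebraMap K Kbar w)) :
    ∃ n : ℤ, ((s.card : ℚ) - (s'.card : ℚ)) * ρ = (n : ℚ) := by
  set ω := algebraMap K Kbar w with hω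
  have hsymm : ∀ x y : Kbar, S.v (x - y) = S.v (y - x) := fun x y => by
    rw [← S.v_neg, neg_sub]
  -- the cluster is cut out by the disc of radius `ρ` around `w`
  have hs2 : s = (rootFinset f).filter fun r => ((ρ : ℚ) : WithTop ℚ) ≤ S.v (r - ω) := by
    obtain ⟨⟨r0, hr0⟩, w0, δ, hsd⟩ := hs
    have hmem : ∀ r ∈ s, ((ρ : ℚ) : WithTop ℚ) ≤ S.v (r - ω) := by
      intro r hr
      rw [← hρ]
      exact Finset.inf_le (f := fun r => S.v (r - ω)) hr
    have hδ : ((δ : ℚ) : WithTop ℚ) ≤ ((ρ : ℚ) : WithTop ℚ) := by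
      rw [← hρ]
      refine le_trans ?_ (hw w0)
      refine Finset.le_inf fun r hr => ?_
      rw [hsd] at hr
      exact (Finset.mem_filter.mp hr).2
    ext r
    constructor
    · intro hr
      refine Finset.mem_filter.mpr ⟨?_, hmem r hr⟩
      rw [hsd] at hr
      exact (Finset.mem_filter.mp hr).1
    · intro hr
      obtain ⟨hrR, hr⟩ := Finset.mem_filter.mp hr
      rw [hsd]
      refine Finset.mem_filter.mpr ⟨hrR, ?_⟩
      have h0 := hmem r0 hr0
      have h1 : ((δ : ℚ) : WithTop ℚ) ≤ S.v (r0 - algebraMap K Kbar w0) := by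
        rw [hsd] at hr0
        exact (Finset.mem_filter.mp hr0).2
      have e : r - algebraMap K Kbar w0 =
          (r - ω) + ((ω - r0) + (r0 - algebraMap K Kbar w0)) := by ring
      rw [e]
      refine le_trans (le_min (hδ.trans hr) ?_) (S.v_add _ _)
      refine le_trans (le_min ?_ h1) (S.v_add _ _)
      rw [hsymm]
      exact hδ.trans h0
  have hsR : s ⊆ rootFinset f := hs2 ▸ Finset.filter_subset _ _
  have hs'R : s' ⊆ rootFinset f := hs' ▸ Finset.filter_subset _ _
  have ms : ∀ r ∈ rootFinset f, r ∈ s ↔ ((ρ : ℚ) : WithTop ℚ) ≤ S.v (ω - r) := by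
    intro r hr
    rw [hs2, Finset.mem_filter, hsymm ω r]
    exact ⟨fun h => h.2, fun h => ⟨hr, h⟩⟩
  have ms' : ∀ r ∈ rootFinset f, r ∈ s' ↔ ((ρ : ℚ) : WithTop ℚ) < S.v (ω - r) := by
    intro r hr
    rw [hs', Finset.mem_filter, hsymm ω r]
    exact ⟨fun h => h.2, fun h => ⟨hr, h⟩⟩
  have hss : s' ⊆ s := fun r hr =>
    (ms r (hs'R hr)).mpr ((ms' r (hs'R hr)).mp hr).le
  have fin_of : ∀ r : Kbar, S.v (ω - r) ≤ ((ρ : ℚ) : WithTop ℚ) → ω - r ≠ 0 := by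
    intro r hr h0
    rw [h0, (S.v_top_iff 0).mpr rfl] at hr
    exact WithTop.coe_ne_top (top_le_iff.mp hr)
  obtain ⟨n1, h1⟩ := int_sum S f hsep w (rootFinset f \ s) Finset.sdiff_subset
    (by
      intro d hd
      obtain ⟨hdR, hd⟩ := Finset.mem_sdiff.mp hd
      rw [ms d hdR, not_le] at hd
      exact fin_of d hd.le)
    (by
      intro d hd e he hed
      obtain ⟨hdR, hd⟩ := Finset.mem_sdiff.mp hd
      rw [ms d hdR, not_le] at hd
      rw [Finset.mem_sdiff, not_and, not_not] at hed
      exact lt_of_lt_of_le hd ((ms e he).mp (hed he)))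
  obtain ⟨n2, h2⟩ := int_sum S f hsep w (rootFinset f \ s') Finset.sdiff_subset
    (by
      intro d hd
      obtain ⟨hdR, hd⟩ := Finset.mem_sdiff.mp hd
      rw [ms' d hdR, not_lt] at hd
      exact fin_of d hd)
    (by
      intro d hd e he hed
      obtain ⟨hdR, hd⟩ := Finset.mem_sdiff.mp hd
      rw [ms' d hdR, not_lt] at hd
      rw [Finset.mem_sdiff, not_and, not_not] at hed
      exact lt_of_le_of_lt hd ((ms' e he).mp (hed he)))
  have hB : ∑ i ∈ s \ s', uval S (ω - i) = ((s.card : ℚ) - (s'.card : ℚ)) * ρ := by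
    rw [Finset.sum_congr rfl (g := fun _ => ρ), Finset.sum_const, nsmul_eq_mul,
      Finset.card_sdiff_of_subset hss, Nat.cast_sub (Finset.card_le_card hss)]
    intro r hr
    obtain ⟨hr, hr'⟩ := Finset.mem_sdiff.mp hr
    rw [ms' r (hsR hr), not_lt] at hr'
    rw [ms r (hsR hr)] at hr
    have := le_antisymm hr' hr
    unfold uval
    rw [this]
    rfl
  have e1 := Finset.sum_sdiff (f := fun i => uval S (ω - i)) hsR
  have e2 := Finset.sum_sdiff (f := fun i => uval S (ω - i)) hs'R
  have e3 := Finset.sum_sdiff (f := fun i => uval S (ω - i)) hss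
  refine ⟨n2 - n1, ?_⟩
  rw [← hB]
  push_cast
  rw [← h1, ← h2]
  linarith

end ClusterPicture
end

section
/- Let s, s' be rational clusters of f with s proper and s' ⊄ s, and let w_s be a rational centre of s. Then min_{r∈s'} v(r − w_s) = ρ_{s∧s'}. -/
open Polynomial
open scoped Classical

namespace ClusterPicture

variable {K Kbar : Type*} [Field K] [Field Kbar] [Algebra K Kbar]

/-- **Distance to another rational cluster.** Let `s, s'` be rational clusters with `s`
proper and `s' ⊄ s`, let `w` be a rational centre of `s`, and let `t = s ∧ s'` be the
smallest cluster containing both. Then `min_{r ∈ s'} v(r − w) = ρ_{s ∧ s'}` (the radius of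
`t`, computed at any rational centre `wt` of `t`). -/
theorem dmin_eq_radius_of_wedge
    (S : Setup K Kbar) (f : K[X]) (hsep : f.Separable) (hdeg : 1 ≤ f.natDegree)
    (s s' t : Finset Kbar)
    (hs : IsRationalCluster S f s) (hproper : 1 < s.card)
    (hs' : IsRationalCluster S f s') (hnsub : ¬ s' ⊆ s)
    (w : K) (hw : IsRationalCentre S s w)
    (ht : IsCluster S f t) (hst : s ⊆ t) (hs't : s' ⊆ t)
    (hmin : ∀ u : Finset Kbar, IsCluster S f u → s ⊆ u → s' ⊆ u → t ⊆ u)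
    (wt : K) (hwt : IsRationalCentre S t wt) :
    dminK S s' w = dminK S t wt := by
  obtain ⟨hsne, w0, δ, hsdef⟩ := hs
  have tri : ∀ a b c : Kbar, min (S.v (a - b)) (S.v (b - c)) ≤ S.v (a - c) := by
    intro a b c
    have h := S.v_add (a - b) (b - c)
    rwa [sub_add_sub_cancel] at h
  have symm' : ∀ a b : Kbar, S.v (a - b) = S.v (b - a) := by
    intro a b
    rw [← S.v_neg (a - b), neg_sub]
  have hsub : s ⊆ rootFinset f := by
    rw [hsdef]; exact Finset.filter_subset _ _
  have hsub' : s' ⊆ rootFinset f := by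
    obtain ⟨_, w1, δ1, h1⟩ := hs'
    rw [h1]; exact Finset.filter_subset _ _
  have hδ0 : ∀ r ∈ s, ((δ : ℚ) : WithTop ℚ) ≤ S.v (r - algebraMap K Kbar w0) := by
    intro r hr
    rw [hsdef] at hr
    exact (Finset.mem_filter.mp hr).2
  have hδw : ∀ r ∈ s, ((δ : ℚ) : WithTop ℚ) ≤ S.v (r - algebraMap K Kbar w) := by
    intro r hr
    have h1 : ((δ : ℚ) : WithTop ℚ) ≤ dminK S s w0 := Finset.le_inf hδ0
    exact (h1.trans (hw w0)).trans (Finset.inf_le hr)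
  obtain ⟨r0, hr0⟩ := hsne
  have hww0 : ((δ : ℚ) : WithTop ℚ) ≤ S.v (algebraMap K Kbar w - algebraMap K Kbar w0) := by
    refine le_trans (le_min ?_ (hδ0 r0 hr0)) (tri _ r0 _)
    rw [symm']; exact hδw r0 hr0
  obtain ⟨r1, hr1, hr1s⟩ := Finset.not_subset.mp hnsub
  have hr1lt : S.v (r1 - algebraMap K Kbar w) < ((δ : ℚ) : WithTop ℚ) := by
    by_contra hcon
    apply hr1s
    rw [hsdef]
    exact Finset.mem_filter.mpr ⟨hsub' hr1, le_trans (le_min (not_lt.mp hcon) hww0) (tri _ _ _)⟩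
  obtain ⟨r2, hr2, hr2eq⟩ := Finset.exists_mem_eq_inf s' ⟨r1, hr1⟩
    (fun r => S.v (r - algebraMap K Kbar w))
  have hm : dminK S s' w = S.v (r2 - algebraMap K Kbar w) := hr2eq
  have hmin' : ∀ r ∈ s', S.v (r2 - algebraMap K Kbar w) ≤ S.v (r - algebraMap K Kbar w) := by
    intro r hr
    rw [← hm]; exact Finset.inf_le hr
  have hlt : S.v (r2 - algebraMap K Kbar w) < ((δ : ℚ) : WithTop ℚ) :=
    lt_of_le_of_lt (hmin' r1 hr1) hr1lt
  obtain ⟨m, hmq⟩ := WithTop.ne_top_iff_exists.mp (ne_top_of_lt hlt)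
  rw [hm]
  apply le_antisymm
  · have hu : t ⊆ (rootFinset f).filter
        fun r => ((m : ℚ) : WithTop ℚ) ≤ S.v (r - algebraMap K Kbar w) := by
      have h1 : s ⊆ (rootFinset f).filter
          fun r => ((m : ℚ) : WithTop ℚ) ≤ S.v (r - algebraMap K Kbar w) := by
        intro r hr
        refine Finset.mem_filter.mpr ⟨hsub hr, ?_⟩
        rw [hmq]; exact hlt.le.trans (hδw r hr)
      refine hmin _ ⟨⟨r0, h1 hr0⟩, algebraMap K Kbar w, m, rfl⟩ h1 ?_
      intro r hr
      refine Finset.mem_filter.mpr ⟨hsub' hr, ?_⟩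
      rw [hmq]; exact hmin' r hr
    refine le_trans ?_ (hwt w)
    refine Finset.le_inf fun r hr => ?_
    rw [← hmq]; exact (Finset.mem_filter.mp (hu hr)).2
  · by_contra hcon
    have hcon := not_le.mp hcon
    have ha : ∀ r ∈ t, S.v (r2 - algebraMap K Kbar w) < S.v (r - algebraMap K Kbar wt) :=
      fun r hr => lt_of_lt_of_le hcon (Finset.inf_le hr)
    have hb : S.v (r2 - algebraMap K Kbar w)
        < S.v (algebraMap K Kbar wt - algebraMap K Kbar w) := by
      refine lt_of_lt_of_le (lt_min ?_ (lt_of_lt_of_le hlt (hδw r0 hr0))) (tri _ r0 _)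
      rw [symm' (algebraMap K Kbar wt) r0]; exact ha r0 (hst hr0)
    exact lt_irrefl _ (lt_of_lt_of_le (lt_min (ha r2 (hs't hr2)) hb) (tri _ _ _))


end ClusterPicture
end

section
/- Let s, s' be rational clusters of f with s ⊊ s∧s' ⊋ s', and let w_s, w_{s'} be rational centres of s and s' respectively. Then ρ_{s∧s'} = v(w_s − w_{s'}) = d_{s∧s'}. In particular, any cluster t of f having at least two children that are rational clusters satisfies d_t = ρ_t ∈ ℤ, and t is itself a rational cluster. -/
open Polynomial
open scoped Classical

namespace ClusterPicture

variable {K Kbar : Type*} [Field K] [Field Kbar] [Algebra K Kbar]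

lemma v_sub_comm (S : Setup K Kbar) (x y : Kbar) : S.v (x - y) = S.v (y - x) := by
  rw [← S.v_neg (x - y), neg_sub]

lemma v_tri (S : Setup K Kbar) {q : WithTop ℚ} (x y z : Kbar) (h1 : q ≤ S.v (x - y))
    (h2 : q ≤ S.v (y - z)) : q ≤ S.v (x - z) := by
  have := S.v_add (x - y) (y - z)
  rw [sub_add_sub_cancel] at this
  exact (le_min h1 h2).trans this

lemma v_le_of_lt (S : Setup K Kbar) {e : WithTop ℚ} (x y z : Kbar) (h : S.v (x - z) = e)
    (h1 : e < S.v (x - y)) : S.v (y - z) = e := by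
  apply le_antisymm
  · by_contra hc
    push Not at hc
    have := v_tri S x y z (min_le_left (S.v (x - y)) (S.v (y - z))) (min_le_right _ _)
    rw [h] at this
    exact absurd this (not_le.mpr (lt_min h1 hc))
  · exact v_tri S y x z (by rw [v_sub_comm]; exact h1.le) h.ge

lemma cluster_nested (S : Setup K Kbar) (f : K[X]) (t u : Finset Kbar) (ht : IsCluster S f t)
    (hu : IsCluster S f u) (r : Kbar) (hrt : r ∈ t) (hru : r ∈ u) : t ⊆ u ∨ u ⊆ t := by
  obtain ⟨-, z, δ, rfl⟩ := ht
  obtain ⟨-, z', δ', rfl⟩ := hu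
  simp only [Finset.mem_filter] at hrt hru
  rcases le_total δ δ' with h | h
  · right
    intro x hx
    simp only [Finset.mem_filter] at hx ⊢
    have h' : (δ : WithTop ℚ) ≤ δ' := by exact_mod_cast h
    refine ⟨hx.1, v_tri S x r z (v_tri S x z' r (h'.trans hx.2) ?_) hrt.2⟩
    rw [v_sub_comm]; exact h'.trans hru.2
  · left
    intro x hx
    simp only [Finset.mem_filter] at hx ⊢
    have h' : (δ' : WithTop ℚ) ≤ δ := by exact_mod_cast h
    refine ⟨hx.1, v_tri S x r z' (v_tri S x z r (h'.trans hx.2) ?_) hru.2⟩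
    rw [v_sub_comm]; exact h'.trans hrt.2

lemma core (S : Setup K Kbar) (f : K[X]) (s s' t : Finset Kbar) (w w' : K) (δ δ' : ℚ)
    (hs : s = (rootFinset f).filter fun r => (δ : WithTop ℚ) ≤ S.v (r - algebraMap K Kbar w))
    (hs' : s' = (rootFinset f).filter fun r => (δ' : WithTop ℚ) ≤ S.v (r - algebraMap K Kbar w'))
    (hn : s.Nonempty) (hn' : s'.Nonempty) (h1 : ¬ s ⊆ s') (h2 : ¬ s' ⊆ s)
    (ht : IsCluster S f t) (hst : s ⊆ t) (hst' : s' ⊆ t)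
    (hmin : ∀ u : Finset Kbar, IsCluster S f u → s ⊆ u → s' ⊆ u → t ⊆ u) :
    ∃ n : ℤ, S.vK (w - w') = ((n : ℚ) : WithTop ℚ) ∧ depth S t = ((n : ℚ) : WithTop ℚ) ∧
      dminK S t w = ((n : ℚ) : WithTop ℚ) ∧ (∀ x, dminK S t x ≤ ((n : ℚ) : WithTop ℚ)) ∧
      IsRationalCluster S f t := by
  obtain ⟨r, hr⟩ := hn
  obtain ⟨r', hr'⟩ := hn'
  have hlt : S.v (algebraMap K Kbar w - algebraMap K Kbar w') < δ ∧
      S.v (algebraMap K Kbar w - algebraMap K Kbar w') < δ' := by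
    by_contra hc
    rcases le_total δ δ' with h | h
    · have h' : (δ : WithTop ℚ) ≤ δ' := by exact_mod_cast h
      have hv : (δ : WithTop ℚ) ≤ S.v (algebraMap K Kbar w - algebraMap K Kbar w') := by
        by_contra hv
        push Not at hv
        exact hc ⟨hv, hv.trans_le h'⟩
      apply h2
      intro x hx
      rw [hs', Finset.mem_filter] at hx
      rw [hs, Finset.mem_filter]
      exact ⟨hx.1, v_tri S x _ _ (h'.trans hx.2) (by rw [v_sub_comm]; exact hv)⟩
    · have h' : (δ' : WithTop ℚ) ≤ δ := by exact_mod_cast h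
      have hv : (δ' : WithTop ℚ) ≤ S.v (algebraMap K Kbar w - algebraMap K Kbar w') := by
        by_contra hv
        push Not at hv
        exact hc ⟨hv.trans_le h', hv⟩
      apply h1
      intro x hx
      rw [hs, Finset.mem_filter] at hx
      rw [hs', Finset.mem_filter]
      exact ⟨hx.1, v_tri S x _ _ (h'.trans hx.2) hv⟩
  have hne : w - w' ≠ 0 := by
    intro h0
    have : algebraMap K Kbar w - algebraMap K Kbar w' = 0 := by rw [← map_sub, h0, map_zero]
    rw [this, (S.v_top_iff 0).mpr rfl] at hlt
    exact absurd hlt.1 not_top_lt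
  obtain ⟨n, hvn⟩ := S.v_base_int _ hne
  have hv := hvn
  rw [map_sub] at hv
  rw [hv] at hlt
  have hrw : ∀ x ∈ s, ((n : ℚ) : WithTop ℚ) < S.v (x - algebraMap K Kbar w) := by
    intro x hx
    rw [hs, Finset.mem_filter] at hx
    exact hlt.1.trans_le hx.2
  have hrw' : ∀ x ∈ s', ((n : ℚ) : WithTop ℚ) < S.v (x - algebraMap K Kbar w') := by
    intro x hx
    rw [hs', Finset.mem_filter] at hx
    exact hlt.2.trans_le hx.2
  have hrr : S.v (r - r') = ((n : ℚ) : WithTop ℚ) := by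
    have a1 : S.v (r - algebraMap K Kbar w') = ((n : ℚ) : WithTop ℚ) :=
      v_le_of_lt S _ _ _ hv (by rw [v_sub_comm]; exact hrw r hr)
    rw [v_sub_comm] at a1 ⊢
    exact v_le_of_lt S _ _ _ a1 (by rw [v_sub_comm]; exact hrw' r' hr')
  have hsR : s ⊆ rootFinset f := by rw [hs]; exact Finset.filter_subset _ _
  have hsR' : s' ⊆ rootFinset f := by rw [hs']; exact Finset.filter_subset _ _
  have htu : t ⊆ (rootFinset f).filter
      fun r => ((n : ℚ) : WithTop ℚ) ≤ S.v (r - algebraMap K Kbar w) := by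
    have hsu : s ⊆ (rootFinset f).filter
        fun r => ((n : ℚ) : WithTop ℚ) ≤ S.v (r - algebraMap K Kbar w) := by
      intro x hx
      exact Finset.mem_filter.mpr ⟨hsR hx, (hrw x hx).le⟩
    refine hmin _ ⟨⟨r, hsu hr⟩, _, _, rfl⟩ hsu ?_
    intro x hx
    refine Finset.mem_filter.mpr ⟨hsR' hx, v_tri S _ _ _ (hrw' x hx).le ?_⟩
    rw [v_sub_comm]; exact hv.ge
  have htw : ∀ x ∈ t, ((n : ℚ) : WithTop ℚ) ≤ S.v (x - algebraMap K Kbar w) :=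
    fun x hx => (Finset.mem_filter.mp (htu hx)).2
  have hup : ∀ x, dminK S t x ≤ ((n : ℚ) : WithTop ℚ) := by
    intro x
    rw [← hrr]
    refine v_tri S r (algebraMap K Kbar x) r' (Finset.inf_le (hst hr)) ?_
    rw [v_sub_comm]
    exact Finset.inf_le (f := fun r => S.v (r - algebraMap K Kbar x)) (hst' hr')
  refine ⟨n, hvn, ?_, ?_, hup, ?_⟩
  · apply le_antisymm
    · rw [← hrr]
      exact (Finset.inf_le (hst hr)).trans (Finset.inf_le (f := fun x => S.v (r - x)) (hst' hr'))
    · refine Finset.le_inf fun x hx => Finset.le_inf fun y hy => ?_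
      exact v_tri S _ _ _ (htw x hx) (by rw [v_sub_comm]; exact htw y hy)
  · exact le_antisymm (hup w) (Finset.le_inf htw)
  · refine ⟨ht.1, w, n, htu.antisymm ?_⟩
    obtain ⟨-, z, ε, rfl⟩ := ht
    have b1 := (Finset.mem_filter.mp (hst hr)).2
    have b2 := (Finset.mem_filter.mp (hst' hr')).2
    have hε : (ε : WithTop ℚ) ≤ ((n : ℚ) : WithTop ℚ) := by
      rw [← hrr]
      exact v_tri S _ _ _ b1 (by rw [v_sub_comm]; exact b2)
    intro x hx
    rw [Finset.mem_filter] at hx ⊢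
    refine ⟨hx.1, v_tri S _ _ _ (v_tri S _ _ _ (hε.trans hx.2) ?_) b1⟩
    rw [v_sub_comm]
    exact hε.trans (hrw r hr).le

lemma centre_eq (S : Setup K Kbar) (f : K[X]) (s : Finset Kbar) (hs : IsRationalCluster S f s)
    (w : K) (hw : IsRationalCentre S s w) : ∃ δ : ℚ,
    s = (rootFinset f).filter fun r => (δ : WithTop ℚ) ≤ S.v (r - algebraMap K Kbar w) := by
  obtain ⟨⟨r, hr⟩, w₀, δ, h⟩ := hs
  refine ⟨δ, ?_⟩
  have h0 : ∀ x ∈ s, (δ : WithTop ℚ) ≤ S.v (x - algebraMap K Kbar w₀) := by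
    intro x hx
    rw [h, Finset.mem_filter] at hx
    exact hx.2
  have h1 : (δ : WithTop ℚ) ≤ dminK S s w := (Finset.le_inf h0).trans (hw w₀)
  have h2 : ∀ x ∈ s, (δ : WithTop ℚ) ≤ S.v (x - algebraMap K Kbar w) :=
    fun x hx => h1.trans (Finset.inf_le hx)
  ext x
  constructor
  · intro hx
    refine Finset.mem_filter.mpr ⟨?_, h2 x hx⟩
    rw [h] at hx
    exact (Finset.mem_filter.mp hx).1
  · intro hx
    rw [Finset.mem_filter] at hx
    rw [h, Finset.mem_filter]
    refine ⟨hx.1, v_tri S _ _ _ (v_tri S _ _ _ hx.2 ?_) (h0 r hr)⟩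
    rw [v_sub_comm]; exact h2 r hr

lemma rat_cluster (S : Setup K Kbar) (f : K[X]) (s : Finset Kbar)
    (hs : IsRationalCluster S f s) : IsCluster S f s :=
  ⟨hs.1, algebraMap K Kbar hs.2.choose, hs.2.choose_spec⟩

/-- **Clusters with two rational children.** If `s, s'` are rational clusters with
`s ⊊ s∧s' ⊋ s'` and rational centres `w, w'`, then `ρ_{s∧s'} = v(w − w') = d_{s∧s'}`.
In particular any cluster `t` with at least two children that are rational clusters
satisfies `d_t = ρ_t ∈ ℤ`, and `t` is itself a rational cluster. -/
theorem wedge_of_rational_clusters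
    (S : Setup K Kbar) (f : K[X]) (hsep : f.Separable) (hdeg : 1 ≤ f.natDegree) :
    (∀ s s' t : Finset Kbar,
      IsRationalCluster S f s → IsRationalCluster S f s' →
      IsCluster S f t → s ⊆ t → s' ⊆ t →
      (∀ u : Finset Kbar, IsCluster S f u → s ⊆ u → s' ⊆ u → t ⊆ u) →
      s ⊂ t → s' ⊂ t →
      ∀ w w' wt : K, IsRationalCentre S s w → IsRationalCentre S s' w' →
        IsRationalCentre S t wt →
        dminK S t wt = S.vK (w - w') ∧ dminK S t wt = depth S t) ∧
    (∀ t c₁ c₂ : Finset Kbar, IsCluster S f t →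
      IsRationalCluster S f c₁ → IsRationalCluster S f c₂ → c₁ ≠ c₂ →
      c₁ ⊂ t → c₂ ⊂ t →
      (∀ u : Finset Kbar, IsCluster S f u → c₁ ⊂ u → u ⊆ t → u = t) →
      (∀ u : Finset Kbar, IsCluster S f u → c₂ ⊂ u → u ⊆ t → u = t) →
      IsRationalCluster S f t ∧ (∃ n : ℤ, depth S t = (((n : ℚ)) : WithTop ℚ)) ∧
        ∃ w : K, IsRationalCentre S t w ∧ dminK S t w = depth S t) := by
  constructor
  · intro s s' t hs hs' ht hst hst' hmin hlt hlt' w w' wt hw hw' hwt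
    obtain ⟨δ, h⟩ := centre_eq S f s hs w hw
    obtain ⟨δ', h'⟩ := centre_eq S f s' hs' w' hw'
    obtain ⟨n, e1, e2, e3, e4, -⟩ := core S f s s' t w w' δ δ' h h' hs.1 hs'.1
      (fun hc => hlt'.2 (hmin s' (rat_cluster S f s' hs') hc subset_rfl))
      (fun hc => hlt.2 (hmin s (rat_cluster S f s hs) subset_rfl hc)) ht hst hst' hmin
    have : dminK S t wt = ((n : ℚ) : WithTop ℚ) := le_antisymm (e4 wt) (e3 ▸ hwt w)
    exact ⟨this.trans e1.symm, this.trans e2.symm⟩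
  · intro t c₁ c₂ ht h₁ h₂ hne hlt₁ hlt₂ hc₁ hc₂
    have n1 : ¬ c₁ ⊆ c₂ := fun hc =>
      hlt₂.ne (hc₁ c₂ (rat_cluster S f c₂ h₂) (hc.ssubset_of_ne hne) hlt₂.1)
    have n2 : ¬ c₂ ⊆ c₁ := fun hc =>
      hlt₁.ne (hc₂ c₁ (rat_cluster S f c₁ h₁) (hc.ssubset_of_ne hne.symm) hlt₁.1)
    have hmin : ∀ u : Finset Kbar, IsCluster S f u → c₁ ⊆ u → c₂ ⊆ u → t ⊆ u := by
      intro u hu hu1 hu2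
      obtain ⟨r, hr⟩ := h₁.1
      rcases cluster_nested S f t u ht hu r (hlt₁.1 hr) (hu1 hr) with h | h
      · exact h
      · have hss : c₁ ⊂ u := hu1.ssubset_of_ne (fun e => n2 (e ▸ hu2))
        rw [hc₁ u hu hss h]
    obtain ⟨hn₁, w, δ, e⟩ := h₁
    obtain ⟨hn₂, w', δ', e'⟩ := h₂
    obtain ⟨n, -, e2, e3, e4, e5⟩ := core S f c₁ c₂ t w w' δ δ' e e' hn₁ hn₂ n1 n2 ht
      hlt₁.1 hlt₂.1 hmin
    exact ⟨e5, ⟨n, e2⟩, w, fun x => e3 ▸ e4 x, e3.trans e2.symm⟩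

end ClusterPicture
end
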